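/- Let 𝔻 be a finitely generated multiplicative set in ℝ[x₁,…,x_d] and A := 𝔻⁻¹ℝ[x₁,…,x_d]. Let f₁,…,f_k ∈ ℝ[x₁,…,x_d], let T be the preordering of A generated by the images of f₁,…,f_k, and set K(T) := {t ∈ ℝ^d : q(t) ≠ 0 for all q ∈ 𝔻, and f_i(t) ≥ 0 for i = 1,…,k}. Let h₁,…,h_m ∈ A and assume: (i) there is a constant C such that |h_j(t)| ≤ C for all t ∈ K(T) and j = 1,…,m, where h_j(t) denotes the value of h_j at t; (ii) for every λ ∈ ℝ^m of the form λ = (h₁(t),…,h_m(t)) with t ∈ K(T), there exist a finitely generated multiplicative set ℰ_λ in the one-variable polynomial ring ℝ[y], a finite-dimensional commutative unital ℝ-algebra C_λ, and a surjective unital ℝ-algebra homomorphism ρ_λ : (ℰ_λ⁻¹ℝ[y]) ⊗_ℝ C_λ → A/I_λ, where I_λ is the ideal of A generated by h₁−λ₁·1,…,h_m−λ_m·1. Then for every linear functional L on A with L(f) ≥ 0 for all f ∈ T there exists a positive Borel measure μ on ℝ^d such that μ(Z(q)) = 0 for every q ∈ 𝔻 and, for all p ∈ ℝ[x₁,…,x_d]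 and q ∈ 𝔻, the function x ↦ p(x)/q(x) is μ-integrable and L(p/q) = ∫_{ℝ^d} p(x)/q(x) dμ(x). -/

import Mathlib

/-- The preordering of a commutative ring generated by a set `S`:
the smallest subset containing all squares and `S`, closed under addition
and multiplication. -/
inductive IsInPreordering {A : Type*} [CommRing A] (S : Set A) : A → Prop
  | sq (a : A) : IsInPreordering S (a ^ 2)
  | gen {a : A} : a ∈ S → IsInPreordering S a
  | add {a b : A} : IsInPreordering S a → IsInPreordering S b → IsInPreordering S (a + b)
  | mul {a b : A} : IsInPreordering S a → IsInPreordering S b → IsInPreordering S (a * b)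

/-- Evaluation of an element of the localization `𝔻⁻¹ℝ[x₁,…,x_d]` at a point `t`
at which no element of `𝔻` vanishes. -/
noncomputable def evalLoc {d : ℕ} (𝔻 : Submonoid (MvPolynomial (Fin d) ℝ)) (t : Fin d → ℝ)
    (ht : ∀ q ∈ 𝔻, MvPolynomial.eval t q ≠ 0) : Localization 𝔻 →+* ℝ :=
  IsLocalization.lift (M := 𝔻) (S := Localization 𝔻)
    (g := (MvPolynomial.eval t : MvPolynomial (Fin d) ℝ →+* ℝ))
    (fun y => isUnit_iff_ne_zero.2 (ht y y.2))

/-- A finite-dimensional commutative unital real algebra. -/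
structure FinCommAlg where
  carrier : Type
  [isRing : CommRing carrier]
  [isAlgebra : Algebra ℝ carrier]
  findim : FiniteDimensional ℝ carrier

attribute [instance] FinCommAlg.isRing FinCommAlg.isAlgebra

section Part1
set_option linter.unusedSectionVars false

open Polynomial

/-- Intermediate value property for polynomials over a linearly ordered field. -/
def PolyIVT (K : Type*) [Field K] [LinearOrder K] : Prop :=
  ∀ (p : K[X]) (a b : K), a < b → p.eval a * p.eval b < 0 → ∃ c, a < c ∧ c < b ∧ p.eval c = 0

section OneField
variable {K : Type*} [Field K] [LinearOrder K] [IsStrictOrderedRing K]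

theorem PolyIVT.sign_eq (hK : PolyIVT K) (p : K[X]) {a b : K} (hab : a ≤ b)
    (h : ∀ c, a ≤ c → c ≤ b → p.eval c ≠ 0) : SignType.sign (p.eval a) = SignType.sign (p.eval b) := by
  rcases hab.eq_or_lt with rfl | hab
  · rfl
  have ha := h a le_rfl hab.le
  have hb := h b hab.le le_rfl
  rcases lt_or_gt_of_ne ha with ha' | ha' <;> rcases lt_or_gt_of_ne hb with hb' | hb'
  · rw [sign_neg ha', sign_neg hb']
  · obtain ⟨c, h1, h2, h3⟩ := hK p a b hab (mul_neg_of_neg_of_pos ha' hb')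
    exact absurd h3 (h c h1.le h2.le)
  · obtain ⟨c, h1, h2, h3⟩ := hK p a b hab (mul_neg_of_pos_of_neg ha' hb')
    exact absurd h3 (h c h1.le h2.le)
  · rw [sign_pos ha', sign_pos hb']

theorem exists_factor (p : K[X]) (hp : p ≠ 0) (a : K) (ha : p.eval a = 0) :
    ∃ (m : ℕ) (q : K[X]), p = (X - C a) ^ (m + 1) * q ∧ q.eval a ≠ 0 := by
  obtain ⟨q, hq, hd⟩ := Polynomial.exists_eq_pow_rootMultiplicity_mul_and_not_dvd p hp a
  have : 0 < p.rootMultiplicity a := (Polynomial.rootMultiplicity_pos hp).2 ha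
  obtain ⟨m, hm⟩ := Nat.exists_eq_succ_of_ne_zero this.ne'
  refine ⟨m, q, by rw [← Nat.succ_eq_add_one, ← hm]; exact hq, ?_⟩
  intro h0
  exact hd (Polynomial.dvd_iff_isRoot.2 h0)

theorem PolyIVT.rolle_aux (hK : PolyIVT K) (p : K[X]) (hp : p ≠ 0) {a b : K} (hab : a < b)
    (ha : p.eval a = 0) (hb : p.eval b = 0) (hno : ∀ c, a < c → c < b → p.eval c ≠ 0) :
    ∃ c, a < c ∧ c < b ∧ (derivative p).eval c = 0 := by
  obtain ⟨m, q, hq, hqa⟩ := exists_factor p hp a ha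
  have hq0 : q ≠ 0 := by rintro rfl; simp at hqa
  have hba : b - a ≠ 0 := (sub_pos.2 hab).ne'
  have hqb : q.eval b = 0 := by
    rw [hq] at hb
    simp only [eval_mul, eval_pow, eval_sub, eval_X, eval_C, mul_eq_zero] at hb
    rcases hb with hb | hb
    · exact absurd (pow_eq_zero_iff (by omega) |>.1 hb) hba
    · exact hb
  obtain ⟨n, r, hr, hrb⟩ := exists_factor q hq0 b hqb
  have hra : r.eval a ≠ 0 := by
    intro h0; apply hqa; rw [hr]; simp [h0]
  have hs : SignType.sign (r.eval a) = SignType.sign (r.eval b) := by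
    apply hK.sign_eq r hab.le
    intro c h1 h2 h0
    rcases h1.eq_or_lt with rfl | h1
    · exact hra h0
    rcases h2.eq_or_lt with rfl | h2
    · exact hrb h0
    apply hno c h1 h2
    rw [hq, hr]; simp [h0]
  set G : K[X] := ((m : K[X]) + 1) * (X - C b) * r + ((n : K[X]) + 1) * (X - C a) * r
    + (X - C a) * (X - C b) * derivative r with hG
  have hder : derivative p = (X - C a) ^ m * (X - C b) ^ n * G := by
    rw [hq, hr, hG]
    simp only [derivative_mul, derivative_pow, derivative_sub, derivative_X, derivative_C]
    push_cast
    simp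
    ring
  have hGa : G.eval a = (m + 1) * (a - b) * r.eval a := by simp [hG]
  have hGb : G.eval b = (n + 1) * (b - a) * r.eval b := by simp [hG]
  have hrr : 0 < r.eval a * r.eval b := by
    rcases lt_or_gt_of_ne hra with h | h
    · rw [sign_neg h] at hs
      exact mul_pos_of_neg_of_neg h (sign_eq_neg_one_iff.1 hs.symm)
    · rw [sign_pos h] at hs
      exact mul_pos h (sign_eq_one_iff.1 hs.symm)
  have : G.eval a * G.eval b < 0 := by
    rw [hGa, hGb]
    have h1 : (0:K) < m + 1 := by positivity
    have h2 : (0:K) < n + 1 := by positivity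
    have h3 : 0 < (b - a) * (b - a) := mul_pos (sub_pos.2 hab) (sub_pos.2 hab)
    have : (0:K) < (m + 1) * (n + 1) * ((b - a) * (b - a)) * (r.eval a * r.eval b) := by positivity
    linarith [this, show ((m:K) + 1) * (a - b) * r.eval a * ((n + 1) * (b - a) * r.eval b) = -((m + 1) * (n + 1) * ((b - a) * (b - a)) * (r.eval a * r.eval b)) by ring]
  obtain ⟨c, h1, h2, h3⟩ := hK G a b hab this
  exact ⟨c, h1, h2, by rw [hder]; simp [h3]⟩

theorem PolyIVT.rolle (hK : PolyIVT K) (p : K[X]) (hp : p ≠ 0) {a b : K} (hab : a < b)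
    (ha : p.eval a = 0) (hb : p.eval b = 0) :
    ∃ c, a < c ∧ c < b ∧ (derivative p).eval c = 0 := by
  classical
  let S := p.roots.toFinset.filter (fun x => a < x)
  have hS : S.Nonempty := ⟨b, by simp [S, hp, hb, hab]⟩
  obtain ⟨b', hb', hmin⟩ := S.exists_min_image id hS
  have hb'' : p.eval b' = 0 ∧ a < b' := by simpa [S, hp] using hb'
  have hle : b' ≤ b := hmin b (by simp [S, hp, hb, hab])
  obtain ⟨c, h1, h2, h3⟩ := hK.rolle_aux p hp hb''.2 ha hb''.1 (by
    intro c h1 h2 h0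
    have := hmin c (by simp [S, hp, h0, h1])
    exact absurd this (not_le.2 h2))
  exact ⟨c, h1, h2.trans_le hle, h3⟩

theorem PolyIVT.cross (hK : PolyIVT K) (p : K[X]) (hp : p ≠ 0) {a b : K} (hab : a < b)
    (hd : ∀ c, a < c → c < b → (derivative p).eval c ≠ 0)
    (hs : 0 < p.eval a * p.eval b) : ∀ c, a < c → c < b → p.eval c ≠ 0 := by
  intro c hac hcb h0
  obtain ⟨q, hq⟩ := Polynomial.dvd_iff_isRoot.2 h0
  have hqc : (derivative p).eval c = q.eval c := by rw [hq]; simp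
  have hqc0 : q.eval c ≠ 0 := by rw [← hqc]; exact hd c hac hcb
  have hpe : ∀ x, p.eval x = (x - c) * q.eval x := by intro x; conv_lhs => rw [hq]
                                                      simp
  have hno : ∀ x, a ≤ x → x ≤ b → q.eval x ≠ 0 := by
    intro x h1 h2 hx
    have hpx : p.eval x = 0 := by rw [hpe, hx, mul_zero]
    rcases lt_trichotomy x c with h | h | h
    · obtain ⟨y, h3, h4, h5⟩ := hK.rolle p hp h hpx h0
      exact hd y (h1.trans_lt h3) (h4.trans hcb) h5
    · subst h; exact hqc0 hx
    · obtain ⟨y, h3, h4, h5⟩ := hK.rolle p hp h h0 hpx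
      exact hd y (hac.trans h3) (h4.trans_le h2) h5
  have hsg := hK.sign_eq q hab.le hno
  have hqa := hno a le_rfl hab.le
  have : 0 < q.eval a * q.eval b := by
    rcases lt_or_gt_of_ne hqa with h | h
    · rw [sign_neg h] at hsg
      exact mul_pos_of_neg_of_neg h (sign_eq_neg_one_iff.1 hsg.symm)
    · rw [sign_pos h] at hsg
      exact mul_pos h (sign_eq_one_iff.1 hsg.symm)
  rw [hpe a, hpe b] at hs
  have h1 : (a - c) * (b - c) < 0 := mul_neg_of_neg_of_pos (sub_neg.2 hac) (sub_pos.2 hcb)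
  have : (a - c) * (b - c) * (q.eval a * q.eval b) < 0 := mul_neg_of_neg_of_pos h1 this
  linarith [this, show (a - c) * eval a q * ((b - c) * eval b q) = (a - c) * (b - c) * (q.eval a * q.eval b) by ring]

/-- Sign of a polynomial on an interval where the derivative does not vanish, when the end
values do not have opposite signs. -/
theorem PolyIVT.cell_same (hK : PolyIVT K) (p : K[X]) (hp : p ≠ 0) {a b : K} (hab : a < b)
    (hd : ∀ c, a < c → c < b → (derivative p).eval c ≠ 0)
    (hs : 0 ≤ p.eval a * p.eval b) {x : K} (h1 : a < x) (h2 : x < b) :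
    SignType.sign (p.eval x) = if p.eval a = 0 then SignType.sign (p.eval b)
      else SignType.sign (p.eval a) := by
  split_ifs with ha
  · apply hK.sign_eq p h2.le
    intro c h3 h4 h0
    obtain ⟨y, h5, h6, h7⟩ := hK.rolle p hp (h1.trans_le h3) ha h0
    exact hd y h5 (h6.trans_le h4) h7
  · symm
    apply hK.sign_eq p h1.le
    intro c h3 h4 h0
    by_cases hb : p.eval b = 0
    · obtain ⟨y, h5, h6, h7⟩ := hK.rolle p hp (h4.trans_lt h2) h0 hb
      exact hd y (h3.trans_lt h5) h6 h7
    · have hac : a ≠ c := by rintro rfl; exact ha h0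
      exact hK.cross p hp hab hd (lt_of_le_of_ne hs (mul_ne_zero ha hb).symm) c
        (lt_of_le_of_ne h3 hac) (h4.trans_lt h2) h0

theorem PolyIVT.cell_opp (hK : PolyIVT K) (p : K[X]) {a b : K} (hab : a < b)
    (hd : ∀ c, a < c → c < b → (derivative p).eval c ≠ 0)
    (hs : p.eval a * p.eval b < 0) :
    ∃ r, a < r ∧ r < b ∧ p.eval r = 0 ∧
      (∀ x, a < x → x < r → SignType.sign (p.eval x) = SignType.sign (p.eval a)) ∧
      (∀ x, r < x → x < b → SignType.sign (p.eval x) = SignType.sign (p.eval b)) := by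
  have hp : p ≠ 0 := by rintro rfl; simp at hs
  obtain ⟨r, h1, h2, h3⟩ := hK p a b hab hs
  refine ⟨r, h1, h2, h3, ?_, ?_⟩
  · intro x hx1 hx2
    symm
    apply hK.sign_eq p hx1.le
    intro c h4 h5 h0
    obtain ⟨y, h6, h7, h8⟩ := hK.rolle p hp (h5.trans_lt hx2) h0 h3
    exact hd y (h4.trans_lt h6) (h7.trans h2) h8
  · intro x hx1 hx2
    apply hK.sign_eq p hx2.le
    intro c h4 h5 h0
    obtain ⟨y, h6, h7, h8⟩ := hK.rolle p hp (hx1.trans_le h4) h3 h0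
    exact hd y (h1.trans h6) (h7.trans_le h5) h8

theorem exists_bound_sign_aux (p : K[X]) (hp : p ≠ 0) : ∃ M : K, 0 < M ∧
    (∀ x, M ≤ x → SignType.sign (p.eval x) = SignType.sign p.leadingCoeff) := by
  set n := p.natDegree with hn
  set S : K := ∑ i ∈ Finset.range n, |p.coeff i| with hS
  have hS0 : 0 ≤ S := Finset.sum_nonneg (fun i _ => abs_nonneg _)
  have hl : p.leadingCoeff ≠ 0 := leadingCoeff_ne_zero.2 hp
  have hla : 0 < |p.leadingCoeff| := abs_pos.2 hl
  refine ⟨S / |p.leadingCoeff| + 1, by positivity, fun x hx => ?_⟩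
  have hx1 : 1 ≤ x := le_trans (by linarith [div_nonneg hS0 hla.le]) hx
  have hx0 : 0 < x := by linarith
  have hSx : S < |p.leadingCoeff| * x := by
    have : S / |p.leadingCoeff| < x := by linarith
    rw [div_lt_iff₀ hla] at this
    linarith
  have hev : p.eval x = (∑ i ∈ Finset.range n, p.coeff i * x ^ i) + p.leadingCoeff * x ^ n := by
    rw [eval_eq_sum_range, Finset.sum_range_succ]; rfl
  have hlow : |∑ i ∈ Finset.range n, p.coeff i * x ^ i| < |p.leadingCoeff| * x ^ n := by
    rcases Nat.eq_zero_or_pos n with h0 | h0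
    · rw [h0]; simpa using hp
    have : |∑ i ∈ Finset.range n, p.coeff i * x ^ i| ≤ S * x ^ (n - 1) := by
      rw [hS, Finset.sum_mul]
      refine (Finset.abs_sum_le_sum_abs _ _).trans (Finset.sum_le_sum fun i hi => ?_)
      rw [abs_mul, abs_of_nonneg (pow_nonneg hx0.le i)]
      refine mul_le_mul_of_nonneg_left (pow_le_pow_right₀ hx1 ?_) (abs_nonneg _)
      have := Finset.mem_range.1 hi; omega
    refine this.trans_lt ?_
    have e : x ^ n = x * x ^ (n - 1) := by
      rw [← pow_succ']; congr 1; omega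
    rw [e, ← mul_assoc]
    exact mul_lt_mul_of_pos_right hSx (by positivity)
  have hxn : 0 < x ^ n := by positivity
  obtain ⟨h1, h2⟩ := abs_lt.1 hlow
  rcases lt_or_gt_of_ne hl with h | h
  · rw [sign_neg h, sign_neg]
    rw [abs_of_neg h] at h1 h2
    rw [hev]; linarith
  · rw [sign_pos h, sign_pos]
    rw [abs_of_pos h] at h1 h2
    rw [hev]; linarith

/-- Signs near infinity. -/
theorem exists_bound_sign (p : K[X]) (hp : p ≠ 0) : ∃ M : K, 0 < M ∧
    (∀ x, M ≤ x → SignType.sign (p.eval x) = SignType.sign p.leadingCoeff) ∧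
    (∀ x, x ≤ -M → SignType.sign (p.eval x) =
      SignType.sign ((-1) ^ p.natDegree * p.leadingCoeff)) := by
  obtain ⟨M, hM, h1⟩ := exists_bound_sign_aux p hp
  have hd : (-X : K[X]).natDegree = 1 := by simp
  have hc : p.comp (-X) ≠ 0 := by
    intro h
    have := congrArg (fun q => q.comp (-X)) h
    simp [comp_assoc] at this
    exact hp this
  obtain ⟨N, hN, h2⟩ := exists_bound_sign_aux (p.comp (-X)) hc
  refine ⟨max M N, lt_max_of_lt_left hM, fun x hx => h1 x ((le_max_left _ _).trans hx),
    fun x hx => ?_⟩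
  have h3 := h2 (-x) (by linarith [le_max_right M N])
  rw [leadingCoeff_comp (by rw [hd]; norm_num)] at h3
  simpa [mul_comm] using h3

end OneField

section TwoFields
variable {K₁ K₂ : Type*} [Field K₁] [LinearOrder K₁] [IsStrictOrderedRing K₁]
  [Field K₂] [LinearOrder K₂] [IsStrictOrderedRing K₂]

/-- `x` and `y` lie in corresponding cells. -/
def CellRel (Z : Finset (K₁ × K₂)) (x : K₁) (y : K₂) : Prop :=
  ∀ z ∈ Z, cmp z.1 x = cmp z.2 y

/-- finite partial order isomorphism -/
def IsChainRel (Z : Finset (K₁ × K₂)) : Prop :=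
  ∀ z ∈ Z, CellRel Z z.1 z.2

theorem IsChainRel.across {Z : Finset (K₁ × K₂)} (hZ : IsChainRel Z) (x : K₁) :
    ∃ y, CellRel Z x y :=
  Order.PartialIso.exists_across ⟨Z, fun p hp q hq => hZ q hq p hp⟩ x

theorem IsChainRel.across' {Z : Finset (K₁ × K₂)} (hZ : IsChainRel Z) (y : K₂) :
    ∃ x, CellRel Z x y := by
  classical
  have : IsChainRel (Z.image Prod.swap) := by
    intro z hz w hw
    simp only [Finset.mem_image, Prod.exists] at hz hw
    obtain ⟨a, b, hab, rfl⟩ := hz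
    obtain ⟨a', b', hab', rfl⟩ := hw
    exact (hZ _ hab _ hab').symm
  obtain ⟨x, hx⟩ := this.across y
  refine ⟨x, fun z hz => (hx z.swap (Finset.mem_image_of_mem _ hz)).symm⟩

theorem CellRel.eq_iff {Z : Finset (K₁ × K₂)} {x : K₁} {y : K₂} (h : CellRel Z x y)
    {z : K₁ × K₂} (hz : z ∈ Z) : z.1 = x ↔ z.2 = y := eq_iff_eq_of_cmp_eq_cmp (h z hz)

theorem CellRel.lt_iff {Z : Finset (K₁ × K₂)} {x : K₁} {y : K₂} (h : CellRel Z x y)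
    {z : K₁ × K₂} (hz : z ∈ Z) : z.1 < x ↔ z.2 < y := lt_iff_lt_of_cmp_eq_cmp (h z hz)

theorem CellRel.gt_iff {Z : Finset (K₁ × K₂)} {x : K₁} {y : K₂} (h : CellRel Z x y)
    {z : K₁ × K₂} (hz : z ∈ Z) : x < z.1 ↔ y < z.2 := by
  have := h z hz
  rw [← cmp_eq_gt_iff, ← cmp_eq_gt_iff, this]

theorem cellRel_iff {Z : Finset (K₁ × K₂)} {x : K₁} {y : K₂} :
    CellRel Z x y ↔ ∀ z ∈ Z, (z.1 < x ↔ z.2 < y) ∧ (x < z.1 ↔ y < z.2) := by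
  refine ⟨fun h z hz => ⟨h.lt_iff hz, h.gt_iff hz⟩, fun h z hz => ?_⟩
  obtain ⟨h1, h2⟩ := h z hz
  rcases lt_trichotomy z.1 x with h3 | h3 | h3
  · rw [cmp_eq_lt_iff _ _ |>.2 h3, cmp_eq_lt_iff _ _ |>.2 (h1.1 h3)]
  · have : z.2 = y := le_antisymm (not_lt.1 fun h => h3.not_gt (h2.2 h))
      (not_lt.1 fun h => h3.not_lt (h1.2 h))
    rw [cmp_eq_eq_iff _ _ |>.2 h3, cmp_eq_eq_iff _ _ |>.2 this]
  · rw [cmp_eq_gt_iff _ _ |>.2 h3, cmp_eq_gt_iff _ _ |>.2 (h2.1 h3)]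

theorem CellRel.mono {Z Z' : Finset (K₁ × K₂)} (h : Z ⊆ Z') {x : K₁} {y : K₂}
    (hxy : CellRel Z' x y) : CellRel Z x y := fun z hz => hxy z (h hz)

/-- signs agree on corresponding cells -/
def SignsMatch (Z : Finset (K₁ × K₂)) (Q : Set (K₁[X] × K₂[X])) : Prop :=
  ∀ x y, CellRel Z x y → ∀ q ∈ Q, SignType.sign (q.1.eval x) = SignType.sign (q.2.eval y)

/-- an open interval around a non-special point consists of points of the same cell -/
theorem exists_nbhd (Z : Finset K₁) (x : K₁) (hx : x ∉ Z) :
    ∃ u, x < u ∧ ∀ x', x ≤ x' → x' < u → ∀ z ∈ Z, (z < x' ↔ z < x) ∧ (x' < z ↔ x < z) := by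
  obtain ⟨u, h1, h2⟩ : ∃ u, x < u ∧ ∀ z ∈ Z, x < z → u ≤ z := by
    by_cases hne : (Z.filter (fun z => x < z)).Nonempty
    · obtain ⟨u, hu, hmin⟩ := Finset.exists_min_image _ id hne
      refine ⟨u, (Finset.mem_filter.1 hu).2, fun z hz hxz => hmin z (Finset.mem_filter.2 ⟨hz, hxz⟩)⟩
    · refine ⟨x + 1, by linarith, fun z hz hxz => absurd ⟨z, Finset.mem_filter.2 ⟨hz, hxz⟩⟩ hne⟩
  refine ⟨u, h1, fun x' h3 h4 z hz => ⟨⟨fun h => ?_, fun h => h.trans_le h3⟩,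
    ⟨fun h => h3.trans_lt h, fun h => h4.trans_le (h2 z hz h)⟩⟩⟩
  rcases lt_trichotomy z x with h5 | h5 | h5
  · exact h5
  · exact absurd (h5 ▸ hz) hx
  · exact absurd (h2 z hz h5) (not_le.2 (h.trans h4))

theorem SignsMatch.root_mem {Z : Finset (K₁ × K₂)} (hZ : IsChainRel Z) {Q : Set (K₁[X] × K₂[X])}
    (h : SignsMatch Z Q) {q : K₁[X] × K₂[X]} (hq : q ∈ Q) (h0 : q.1 ≠ 0) {x : K₁}
    (hx : q.1.eval x = 0) : ∃ z ∈ Z, z.1 = x := by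
  classical
  by_contra hcon
  push Not at hcon
  obtain ⟨y, hy⟩ := hZ.across x
  obtain ⟨u, hu, hcell⟩ := exists_nbhd (Z.image Prod.fst) x (by
    intro hmem
    obtain ⟨z, hz, rfl⟩ := Finset.mem_image.1 hmem
    exact hcon z hz rfl)
  have hq2 : q.2.eval y = 0 := by
    have := h x y hy q hq
    rw [hx, sign_zero] at this
    exact sign_eq_zero_iff.1 this.symm
  apply h0
  apply Polynomial.eq_zero_of_infinite_isRoot
  apply (Set.Ico_infinite hu).mono
  rintro x' ⟨h1, h2⟩
  have : CellRel Z x' y := by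
    rw [cellRel_iff] at hy ⊢
    intro z hz
    obtain ⟨h3, h4⟩ := hcell x' h1 h2 z.1 (Finset.mem_image_of_mem _ hz)
    rw [h3, h4]; exact hy z hz
  have := h x' y this q hq
  rw [hq2, sign_zero] at this
  exact sign_eq_zero_iff.1 this

theorem SignsMatch.root_mem' {Z : Finset (K₁ × K₂)} (hZ : IsChainRel Z) {Q : Set (K₁[X] × K₂[X])}
    (h : SignsMatch Z Q) {q : K₁[X] × K₂[X]} (hq : q ∈ Q) (h0 : q.1 ≠ 0) {y : K₂}
    (hy : q.2.eval y = 0) : ∃ z ∈ Z, z.2 = y ∧ q.1.eval z.1 = 0 := by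
  obtain ⟨x, hx⟩ := hZ.across' y
  have hq1 : q.1.eval x = 0 := by
    have := h x y hx q hq
    rw [hy, sign_zero] at this
    exact sign_eq_zero_iff.1 this
  obtain ⟨z, hz, rfl⟩ := h.root_mem hZ hq h0 hq1
  exact ⟨z, hz, (hx.eq_iff hz).1 rfl, hq1⟩

open Classical in
/-- the special points that are roots -/
noncomputable def rootPart (Z : Finset (K₁ × K₂)) (Q : Set (K₁[X] × K₂[X])) : Finset (K₁ × K₂) :=
  Z.filter (fun z => ∃ q ∈ Q, q.1 ≠ 0 ∧ q.1.eval z.1 = 0)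

theorem rootPart_subset (Z : Finset (K₁ × K₂)) (Q : Set (K₁[X] × K₂[X])) :
    rootPart Z Q ⊆ Z := by
  classical exact Finset.filter_subset _ _

theorem IsChainRel.mono {Z Z' : Finset (K₁ × K₂)} (h : Z ⊆ Z') (hZ : IsChainRel Z') :
    IsChainRel Z := fun z hz => (hZ z (h hz)).mono h

theorem SignsMatch.rootPart (hK₂ : PolyIVT K₂) {Z : Finset (K₁ × K₂)} (hZ : IsChainRel Z)
    {Q : Set (K₁[X] × K₂[X])} (h : SignsMatch Z Q) : SignsMatch (rootPart Z Q) Q := by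
  intro x y hxy q hq
  obtain ⟨y', hy'⟩ := hZ.across x
  rw [h x y' hy' q hq]
  have hxy' := hy'.mono (rootPart_subset Z Q)
  by_cases h0 : q.1 = 0
  · have hz : ∀ y, q.2.eval y = 0 := by
      intro y
      obtain ⟨x, hx⟩ := hZ.across' y
      have := h x y hx q hq
      rw [h0, eval_zero, sign_zero] at this
      exact sign_eq_zero_iff.1 this.symm
    rw [hz, hz]
  -- no root in between
  have key : ∀ y'', (y ≤ y'' ∧ y'' ≤ y') ∨ (y' ≤ y'' ∧ y'' ≤ y) → q.2.eval y'' = 0 → y = y' := by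
    intro y'' hb hr
    obtain ⟨z, hz, hz2, hz1⟩ := h.root_mem' hZ hq h0 hr
    have hzr : z ∈ _root_.rootPart Z Q := by
      simp only [_root_.rootPart, Finset.mem_filter]
      exact ⟨hz, q, hq, h0, hz1⟩
    have e1 := hxy z hzr
    have e2 := hxy' z hzr
    rw [e1] at e2
    rw [hz2] at e2
    rcases hb with ⟨h1, h2⟩ | ⟨h1, h2⟩
    · rcases h2.eq_or_lt with h2 | h2
      · subst h2
        rw [cmp_self_eq_eq] at e2
        exact (cmp_eq_eq_iff _ _ |>.1 e2).symm
      · rw [cmp_eq_lt_iff _ _ |>.2 h2, cmp_eq_lt_iff] at e2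
        exact absurd e2 (not_lt.2 h1)
    · rcases h1.eq_or_lt with h1 | h1
      · subst h1
        rw [cmp_self_eq_eq] at e2
        exact (cmp_eq_eq_iff _ _ |>.1 e2).symm
      · rw [cmp_eq_gt_iff _ _ |>.2 h1, cmp_eq_gt_iff] at e2
        exact absurd e2 (not_lt.2 h2)
  by_cases he : y = y'
  · rw [he]
  rcases le_total y y' with hle | hle
  · exact (hK₂.sign_eq q.2 hle fun c h1 h2 h3 => he (key c (Or.inl ⟨h1, h2⟩) h3)).symm
  · exact hK₂.sign_eq q.2 hle fun c h1 h2 h3 => he (key c (Or.inr ⟨h1, h2⟩) h3)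

end TwoFields

end Part1

section Part2
set_option linter.unusedSectionVars false
open Polynomial
section TwoFields
variable {K₁ K₂ : Type*} [Field K₁] [LinearOrder K₁] [IsStrictOrderedRing K₁]
  [Field K₂] [LinearOrder K₂] [IsStrictOrderedRing K₂]

theorem sign_mul_neg_iff {K : Type*} [Field K] [LinearOrder K] [IsStrictOrderedRing K] (a b : K) :
    a * b < 0 ↔ SignType.sign a * SignType.sign b = -1 := by
  rw [← sign_mul, sign_eq_neg_one_iff]

/-- Adding one polynomial to the sign table. -/
theorem add_poly (hK₁ : PolyIVT K₁) (hK₂ : PolyIVT K₂) {Z : Finset (K₁ × K₂)} (hZ : IsChainRel Z)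
    (p₁ : K₁[X]) (p₂ : K₂[X]) (hp₁ : p₁ ≠ 0) (hp₂ : p₂ ≠ 0)
    (hs : ∀ z ∈ Z, SignType.sign (p₁.eval z.1) = SignType.sign (p₂.eval z.2))
    (hd₁ : ∀ x, (derivative p₁).eval x = 0 → ∃ z ∈ Z, z.1 = x)
    (hd₂ : ∀ y, (derivative p₂).eval y = 0 → ∃ z ∈ Z, z.2 = y)
    (hup : ∀ x y, CellRel Z x y → (∀ z ∈ Z, z.1 < x) →
      SignType.sign (p₁.eval x) = SignType.sign (p₂.eval y))
    (hlo : ∀ x y, CellRel Z x y → (∀ z ∈ Z, x < z.1) →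
      SignType.sign (p₁.eval x) = SignType.sign (p₂.eval y)) :
    ∃ Z', Z ⊆ Z' ∧ IsChainRel Z' ∧ ∀ x y, CellRel Z' x y →
      SignType.sign (p₁.eval x) = SignType.sign (p₂.eval y) := by
  classical
  set N : Finset (K₁ × K₂) := (p₁.roots.toFinset ×ˢ p₂.roots.toFinset).filter
    (fun z => CellRel Z z.1 z.2) with hN
  have memN : ∀ z, z ∈ N ↔ (p₁.eval z.1 = 0 ∧ p₂.eval z.2 = 0) ∧ CellRel Z z.1 z.2 := by
    intro z; simp [hN, hp₁, hp₂]
  refine ⟨Z ∪ N, Finset.subset_union_left, ?_, ?_⟩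
  · -- chain
    have hNN : ∀ z ∈ N, ∀ w ∈ N, w.1 < z.1 → w.2 < z.2 := by
      intro z hz w hw hlt
      obtain ⟨⟨hz1, hz2⟩, hz3⟩ := (memN z).1 hz
      obtain ⟨⟨hw1, hw2⟩, hw3⟩ := (memN w).1 hw
      obtain ⟨c, h1, h2, h3⟩ := hK₁.rolle p₁ hp₁ hlt hw1 hz1
      obtain ⟨v, hv, rfl⟩ := hd₁ c h3
      exact ((hw3.gt_iff hv).1 h1).trans ((hz3.lt_iff hv).1 h2)
    have hNN' : ∀ z ∈ N, ∀ w ∈ N, w.2 < z.2 → w.1 < z.1 := by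
      intro z hz w hw hlt
      obtain ⟨⟨hz1, hz2⟩, hz3⟩ := (memN z).1 hz
      obtain ⟨⟨hw1, hw2⟩, hw3⟩ := (memN w).1 hw
      obtain ⟨c, h1, h2, h3⟩ := hK₂.rolle p₂ hp₂ hlt hw2 hz2
      obtain ⟨v, hv, rfl⟩ := hd₂ c h3
      exact ((hw3.gt_iff hv).2 h1).trans ((hz3.lt_iff hv).2 h2)
    intro z hz
    rw [cellRel_iff]
    intro w hw
    rcases Finset.mem_union.1 hz with hz | hz <;> rcases Finset.mem_union.1 hw with hw | hw
    · exact cellRel_iff.1 (hZ z hz) w hw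
    · have := ((memN w).1 hw).2
      exact ⟨this.gt_iff hz, this.lt_iff hz⟩
    · have := ((memN z).1 hz).2
      exact ⟨this.lt_iff hw, this.gt_iff hw⟩
    · exact ⟨⟨hNN z hz w hw, hNN' z hz w hw⟩, ⟨hNN w hw z hz, hNN' w hw z hz⟩⟩
  · intro x y hxy
    have hxyZ := hxy.mono (Finset.subset_union_left (s₁ := Z) (s₂ := N))
    by_cases hpt : ∃ z ∈ Z, z.1 = x
    · obtain ⟨z, hz, rfl⟩ := hpt
      rw [← (hxyZ.eq_iff hz).1 rfl]; exact hs z hz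
    push Not at hpt
    by_cases hlow : (Z.filter (fun z => z.1 < x)).Nonempty
    swap
    · apply hlo x y hxyZ
      intro z hz
      rcases lt_trichotomy z.1 x with h | h | h
      · exact absurd ⟨z, Finset.mem_filter.2 ⟨hz, h⟩⟩ hlow
      · exact absurd h (hpt z hz)
      · exact h
    by_cases hupp : (Z.filter (fun z => x < z.1)).Nonempty
    swap
    · apply hup x y hxyZ
      intro z hz
      rcases lt_trichotomy z.1 x with h | h | h
      · exact h
      · exact absurd h (hpt z hz)
      · exact absurd ⟨z, Finset.mem_filter.2 ⟨hz, h⟩⟩ hupp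
    obtain ⟨a, ha, hamax⟩ := Finset.exists_max_image _ Prod.fst hlow
    obtain ⟨b, hb, hbmin⟩ := Finset.exists_min_image _ Prod.fst hupp
    obtain ⟨haZ, hax⟩ := Finset.mem_filter.1 ha
    obtain ⟨hbZ, hxb⟩ := Finset.mem_filter.1 hb
    have hno : ∀ z ∈ Z, z.1 ≤ a.1 ∨ b.1 ≤ z.1 := by
      intro z hz
      rcases lt_trichotomy z.1 x with h | h | h
      · exact Or.inl (hamax z (Finset.mem_filter.2 ⟨hz, h⟩))
      · exact absurd h (hpt z hz)
      · exact Or.inr (hbmin z (Finset.mem_filter.2 ⟨hz, h⟩))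
    have hle : ∀ z ∈ Z, ∀ w ∈ Z, z.1 ≤ w.1 → z.2 ≤ w.2 := by
      intro z hz w hw h
      exact not_lt.1 fun h' => (not_lt.2 h) (((hZ z hz).lt_iff hw).2 h')
    have hno' : ∀ z ∈ Z, z.2 ≤ a.2 ∨ b.2 ≤ z.2 := by
      intro z hz
      rcases hno z hz with h | h
      · exact Or.inl (hle z hz a haZ h)
      · exact Or.inr (hle b hbZ z hz h)
    have hay : a.2 < y := (hxyZ.lt_iff haZ).1 hax
    have hyb : y < b.2 := (hxyZ.gt_iff hbZ).1 hxb
    have hcell : ∀ x' y', a.1 < x' → x' < b.1 → a.2 < y' → y' < b.2 → CellRel Z x' y' := by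
      intro x' y' h1 h2 h3 h4
      rw [cellRel_iff]
      intro z hz
      rcases hno z hz with h | h
      · have h' := hle z hz a haZ h
        exact ⟨⟨fun _ => h'.trans_lt h3, fun _ => h.trans_lt h1⟩,
          ⟨fun h5 => absurd (h5.trans_le h) h1.not_gt, fun h5 => absurd (h5.trans_le h') h3.not_gt⟩⟩
      · have h' := hle b hbZ z hz h
        exact ⟨⟨fun h5 => absurd (h.trans_lt h5) h2.not_gt,
          fun h5 => absurd (h'.trans_lt h5) h4.not_gt⟩,
          ⟨fun _ => h4.trans_le h', fun _ => h2.trans_le h⟩⟩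
    have hd1 : ∀ c, a.1 < c → c < b.1 → (derivative p₁).eval c ≠ 0 := by
      intro c h1 h2 h0
      obtain ⟨z, hz, rfl⟩ := hd₁ c h0
      rcases hno z hz with h | h
      · exact absurd h1 (not_lt.2 h)
      · exact absurd h2 (not_lt.2 h)
    have hd2 : ∀ c, a.2 < c → c < b.2 → (derivative p₂).eval c ≠ 0 := by
      intro c h1 h2 h0
      obtain ⟨z, hz, rfl⟩ := hd₂ c h0
      rcases hno' z hz with h | h
      · exact absurd h1 (not_lt.2 h)
      · exact absurd h2 (not_lt.2 h)
    have hsa := hs a haZ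
    have hsb := hs b hbZ
    have hneg : p₁.eval a.1 * p₁.eval b.1 < 0 ↔ p₂.eval a.2 * p₂.eval b.2 < 0 := by
      rw [sign_mul_neg_iff, sign_mul_neg_iff, hsa, hsb]
    have hza : p₁.eval a.1 = 0 ↔ p₂.eval a.2 = 0 := by
      rw [← sign_eq_zero_iff, hsa, sign_eq_zero_iff]
    by_cases hopp : p₁.eval a.1 * p₁.eval b.1 < 0
    · obtain ⟨r₁, h1, h2, h3, h4, h5⟩ := hK₁.cell_opp p₁ (hax.trans hxb) hd1 hopp
      obtain ⟨r₂, k1, k2, k3, k4, k5⟩ := hK₂.cell_opp p₂ (hay.trans hyb) hd2 (hneg.1 hopp)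
      have hr : (r₁, r₂) ∈ Z ∪ N := Finset.mem_union_right _
        ((memN _).2 ⟨⟨h3, k3⟩, hcell r₁ r₂ h1 h2 k1 k2⟩)
      rcases lt_trichotomy x r₁ with h | h | h
      · rw [h4 x hax h, k4 y hay ((hxy.gt_iff hr).1 h), hsa]
      · have := (hxy.eq_iff hr).1 h.symm
        simp only at this
        rw [h, h3, ← this, k3, sign_zero, sign_zero]
      · rw [h5 x h hxb, k5 y ((hxy.lt_iff hr).1 h) hyb, hsb]
    · rw [hK₁.cell_same p₁ hp₁ (hax.trans hxb) hd1 (not_lt.1 hopp) hax hxb,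
        hK₂.cell_same p₂ hp₂ (hay.trans hyb) hd2 (not_lt.1 (mt hneg.2 hopp)) hay hyb]
      simp only [hza, hsa, hsb]

theorem pair_lt {a b : K₁} {c d : K₂} (h : a < b) (h' : c < d) :
    (a < b ↔ c < d) ∧ (b < a ↔ d < c) :=
  ⟨iff_of_true h h', iff_of_false h.not_gt h'.not_gt⟩

/-- Adding sentinels at infinity. -/
theorem add_sentinels {Z : Finset (K₁ × K₂)} (hZ : IsChainRel Z)
    (p₁ : K₁[X]) (p₂ : K₂[X]) (hp₁ : p₁ ≠ 0) (hp₂ : p₂ ≠ 0) (hdeg : p₁.natDegree = p₂.natDegree)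
    (hlc : SignType.sign p₁.leadingCoeff = SignType.sign p₂.leadingCoeff)
    (hs : ∀ z ∈ Z, SignType.sign (p₁.eval z.1) = SignType.sign (p₂.eval z.2)) :
    ∃ Z', Z ⊆ Z' ∧ IsChainRel Z' ∧
      (∀ z ∈ Z', SignType.sign (p₁.eval z.1) = SignType.sign (p₂.eval z.2)) ∧
      (∀ x y, CellRel Z' x y → (∀ z ∈ Z', z.1 < x) →
        SignType.sign (p₁.eval x) = SignType.sign (p₂.eval y)) ∧
      (∀ x y, CellRel Z' x y → (∀ z ∈ Z', x < z.1) →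
        SignType.sign (p₁.eval x) = SignType.sign (p₂.eval y)) := by
  classical
  obtain ⟨A, hA, hA1, hA2⟩ := exists_bound_sign p₁ hp₁
  obtain ⟨B, hB, hB1, hB2⟩ := exists_bound_sign p₂ hp₂
  set M : K₁ := A + ∑ z ∈ Z, |z.1| with hM
  set N : K₂ := B + ∑ z ∈ Z, |z.2| with hN
  have hS1 : 0 ≤ ∑ z ∈ Z, |z.1| := Finset.sum_nonneg fun _ _ => abs_nonneg _
  have hS2 : 0 ≤ ∑ z ∈ Z, |z.2| := Finset.sum_nonneg fun _ _ => abs_nonneg _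
  have hMz : ∀ z ∈ Z, -M < z.1 ∧ z.1 < M := by
    intro z hz
    have : |z.1| ≤ ∑ z ∈ Z, |z.1| :=
      Finset.single_le_sum (f := fun z : K₁ × K₂ => |z.1|) (fun _ _ => abs_nonneg _) hz
    exact abs_lt.1 (by linarith)
  have hNz : ∀ z ∈ Z, -N < z.2 ∧ z.2 < N := by
    intro z hz
    have : |z.2| ≤ ∑ z ∈ Z, |z.2| :=
      Finset.single_le_sum (f := fun z : K₁ × K₂ => |z.2|) (fun _ _ => abs_nonneg _) hz
    exact abs_lt.1 (by linarith)
  have hMA : A ≤ M := by linarith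
  have hNB : B ≤ N := by linarith
  have hlc' : SignType.sign ((-1) ^ p₁.natDegree * p₁.leadingCoeff) =
      SignType.sign ((-1) ^ p₂.natDegree * p₂.leadingCoeff) := by
    rw [sign_mul, sign_mul, hlc, hdeg, sign_pow, sign_pow]
    simp
  have hpos : ∀ x y, M ≤ x → N ≤ y → SignType.sign (p₁.eval x) = SignType.sign (p₂.eval y) := by
    intro x y h1 h2
    rw [hA1 x (hMA.trans h1), hB1 y (hNB.trans h2), hlc]
  have hneg : ∀ x y, x ≤ -M → y ≤ -N →
      SignType.sign (p₁.eval x) = SignType.sign (p₂.eval y) := by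
    intro x y h1 h2
    rw [hA2 x (by linarith), hB2 y (by linarith), hlc']
  refine ⟨insert (M, N) (insert (-M, -N) Z), ?_, ?_, ?_, ?_, ?_⟩
  · intro z hz; simp [hz]
  · intro z hz
    rw [cellRel_iff]
    intro w hw
    have hM0 : -M < M := by linarith
    have hN0 : -N < N := by linarith
    simp only [Finset.mem_insert] at hz hw
    rcases hz with rfl | rfl | hz <;> rcases hw with rfl | rfl | hw
    · exact ⟨by simp, by simp⟩
    · exact pair_lt hM0 hN0
    · exact pair_lt (hMz w hw).2 (hNz w hw).2
    · exact (pair_lt hM0 hN0).symm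
    · exact ⟨by simp, by simp⟩
    · exact (pair_lt (hMz w hw).1 (hNz w hw).1).symm
    · exact (pair_lt (hMz z hz).2 (hNz z hz).2).symm
    · exact pair_lt (hMz z hz).1 (hNz z hz).1
    · exact cellRel_iff.1 (hZ z hz) w hw
  · intro z hz
    simp only [Finset.mem_insert] at hz
    rcases hz with rfl | rfl | hz
    · exact hpos _ _ le_rfl le_rfl
    · exact hneg _ _ le_rfl le_rfl
    · exact hs z hz
  · intro x y hxy h
    have hm : (M, N) ∈ insert (M, N) (insert (-M, -N) Z) := by simp
    exact hpos _ _ (h _ hm).le ((hxy.lt_iff hm).1 (h _ hm)).le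
  · intro x y hxy h
    have hm : (-M, -N) ∈ insert (M, N) (insert (-M, -N) Z) := by simp
    exact hneg _ _ (h _ hm).le ((hxy.gt_iff hm).1 (h _ hm)).le

/-- The step of the elimination: `Q` is the set of old polynomials together with the derivative of
the new polynomial; `R` contains also the remainders. -/
theorem match_step (hK₁ : PolyIVT K₁) (hK₂ : PolyIVT K₂) {Z : Finset (K₁ × K₂)} (hZ : IsChainRel Z)
    {Q R : Set (K₁[X] × K₂[X])} (hQR : Q ⊆ R) (hR : SignsMatch Z R)
    (p₁ : K₁[X]) (p₂ : K₂[X]) (hp₂ : p₂ ≠ 0) (hdeg : p₁.natDegree = p₂.natDegree)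
    (hlc : SignType.sign p₁.leadingCoeff = SignType.sign p₂.leadingCoeff)
    (hder : (derivative p₁, derivative p₂) ∈ Q) (hder0 : derivative p₁ ≠ 0)
    (hrem : ∀ q ∈ Q, q.1 ≠ 0 → ∀ x y, q.1.eval x = 0 → q.2.eval y = 0 →
      ∃ r ∈ R, SignType.sign (p₁.eval x) = SignType.sign (r.1.eval x) ∧
        SignType.sign (p₂.eval y) = SignType.sign (r.2.eval y)) :
    ∃ Z', IsChainRel Z' ∧ SignsMatch Z' (insert (p₁, p₂) Q) := by
  have hp₁ : p₁ ≠ 0 := by rintro rfl; simp at hder0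
  have hQ : SignsMatch Z Q := fun x y h q hq => hR x y h q (hQR hq)
  have hQ' := hQ.rootPart hK₂ hZ
  have hZ' := hZ.mono (rootPart_subset Z Q)
  have hs : ∀ z ∈ rootPart Z Q, SignType.sign (p₁.eval z.1) = SignType.sign (p₂.eval z.2) := by
    intro z hz
    have hz' := hz
    simp only [rootPart, Finset.mem_filter] at hz'
    obtain ⟨hzZ, q, hq, hq0, hq1⟩ := hz'
    have hq2 : q.2.eval z.2 = 0 := by
      have := hQ z.1 z.2 (hZ z hzZ) q hq
      rw [hq1, sign_zero] at this
      exact sign_eq_zero_iff.1 this.symm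
    obtain ⟨r, hr, h1, h2⟩ := hrem q hq hq0 z.1 z.2 hq1 hq2
    rw [h1, h2]
    exact hR z.1 z.2 (hZ z hzZ) r hr
  obtain ⟨Z₁, hsub, hZ₁, hs₁, hup, hlo⟩ := add_sentinels hZ' p₁ p₂ hp₁ hp₂ hdeg hlc hs
  obtain ⟨Z₂, hsub₂, hZ₂, hfin⟩ := add_poly hK₁ hK₂ hZ₁ p₁ p₂ hp₁ hp₂ hs₁
    (fun x hx => by
      obtain ⟨z, hz, h⟩ := hQ'.root_mem hZ' hder hder0 hx
      exact ⟨z, hsub hz, h⟩)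
    (fun y hy => by
      obtain ⟨z, hz, h, _⟩ := hQ'.root_mem' hZ' hder hder0 hy
      exact ⟨z, hsub hz, h⟩) hup hlo
  refine ⟨Z₂, hZ₂, ?_⟩
  intro x y hxy q hq
  rcases hq with rfl | hq
  · exact hfin x y hxy
  · exact hQ' x y ((hxy.mono hsub₂).mono hsub) q hq

end TwoFields

end Part2

section Part3
set_option linter.unusedSectionVars false
open Polynomial
section Transfer
variable {K₁ K₂ : Type*} [Field K₁] [LinearOrder K₁] [IsStrictOrderedRing K₁]
  [Field K₂] [LinearOrder K₂] [IsStrictOrderedRing K₂] {D : Type*} [CommRing D]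

theorem pseudo_div (q : D[X]) (hq : 0 < q.natDegree) : ∀ (n : ℕ) (p : D[X]), p.natDegree = n →
    ∃ (e : ℕ) (s r : D[X]), C q.leadingCoeff ^ e * p = q * s + r ∧ r.natDegree < q.natDegree := by
  intro n
  induction n using Nat.strong_induction_on with
  | _ n ih =>
    intro p hp
    by_cases hlt : p.natDegree < q.natDegree
    · exact ⟨0, 0, p, by simp, hlt⟩
    push Not at hlt
    set p' := C q.leadingCoeff * p - C p.leadingCoeff * X ^ (p.natDegree - q.natDegree) * q with hp'
    have h1 : p'.natDegree ≤ p.natDegree := by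
      apply (natDegree_sub_le _ _).trans
      apply max_le (natDegree_C_mul_le _ _)
      refine natDegree_mul_le.trans ?_
      have := natDegree_C_mul_X_pow_le p.leadingCoeff (p.natDegree - q.natDegree)
      omega
    have h2 : p'.coeff p.natDegree = 0 := by
      rw [hp', coeff_sub, coeff_C_mul, mul_assoc, coeff_C_mul, coeff_X_pow_mul']
      rw [if_pos (by omega)]
      rw [show p.natDegree - (p.natDegree - q.natDegree) = q.natDegree by omega]
      simp only [coeff_natDegree]; ring
    have h3 : p'.natDegree < p.natDegree := by
      refine lt_of_le_of_ne h1 fun h => ?_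
      rw [← h, coeff_natDegree, leadingCoeff_eq_zero] at h2
      rw [h2] at h; simp at h; omega
    obtain ⟨e, s, r, h4, h5⟩ := ih p'.natDegree (hp ▸ h3) p' rfl
    refine ⟨e + 1, s + C q.leadingCoeff ^ e * (C p.leadingCoeff * X ^ (p.natDegree - q.natDegree)), r,
      ?_, h5⟩
    rw [mul_add, add_right_comm, ← h4, hp']; ring

theorem pseudo_div_even (q : D[X]) (hq : 0 < q.natDegree) (p : D[X]) :
    ∃ (e : ℕ) (s r : D[X]), C q.leadingCoeff ^ (2 * e) * p = q * s + r ∧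
      r.natDegree < q.natDegree := by
  obtain ⟨e, s, r, h1, h2⟩ := pseudo_div q hq _ p rfl
  refine ⟨e, C q.leadingCoeff ^ e * s, C (q.leadingCoeff ^ e) * r, ?_,
    (natDegree_C_mul_le _ _).trans_lt h2⟩
  have : C q.leadingCoeff ^ (2 * e) * p = C q.leadingCoeff ^ e * (C q.leadingCoeff ^ e * p) := by ring
  rw [this, h1, C_pow]; ring

/-- the filter of ring homs which have finitely many prescribed signs -/
def signFilter (K₂ : Type*) [Field K₂] [LinearOrder K₂] (φ₁ : D →+* K₁) : Filter (D →+* K₂) :=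
  ⨅ s : D, Filter.principal {φ₂ | SignType.sign (φ₂ s) = SignType.sign (φ₁ s)}

theorem signFilter_mem (φ₁ : D →+* K₁) (s : D) :
    ∀ᶠ φ₂ in signFilter K₂ φ₁, SignType.sign (φ₂ s) = SignType.sign (φ₁ s) :=
  Filter.mem_iInf_of_mem s (Filter.mem_principal_self _)

theorem signFilter_exists {φ₁ : D →+* K₁} {P : (D →+* K₂) → Prop}
    (h : ∀ᶠ φ₂ in signFilter K₂ φ₁, P φ₂) :
    ∃ S : Finset D, ∀ φ₂ : D →+* K₂,
      (∀ s ∈ S, SignType.sign (φ₂ s) = SignType.sign (φ₁ s)) → P φ₂ := by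
  have h' : {φ₂ | P φ₂} ∈ ⨅ s : D, Filter.principal
    {φ₂ : D →+* K₂ | SignType.sign (φ₂ s) = SignType.sign (φ₁ s)} := h
  rw [Filter.mem_iInf_finite] at h'
  obtain ⟨t, ht⟩ := h'
  rw [Filter.iInf_principal_finset, Filter.mem_principal] at ht
  exact ⟨t, fun φ₂ h => ht (by simpa using h)⟩

theorem map_eraseLead_of {K : Type*} [Field K] (q : D[X]) (φ : D →+* K) (hφ : φ q.leadingCoeff = 0) :
    q.eraseLead.map φ = q.map φ := by
  have h := congrArg (Polynomial.map φ) (eraseLead_add_C_mul_X_pow q)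
  rw [Polynomial.map_add, Polynomial.map_mul, map_C, hφ, C_0, zero_mul, add_zero] at h
  exact h

theorem exists_normal (φ₁ : D →+* K₁) : ∀ (n : ℕ) (q : D[X]), q.support.card = n →
    ∃ q' : D[X], q'.natDegree ≤ q.natDegree ∧ q'.map φ₁ = q.map φ₁ ∧
      (q' = 0 ∨ φ₁ q'.leadingCoeff ≠ 0) ∧ ∀ᶠ φ₂ in signFilter K₂ φ₁, q'.map φ₂ = q.map φ₂ := by
  intro n
  induction n with
  | zero =>
    intro q hq
    have : q = 0 := by simpa using hq
    exact ⟨0, by simp, by simp [this], Or.inl rfl, by simp [this]⟩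
  | succ n ih =>
    intro q hq
    by_cases h0 : φ₁ q.leadingCoeff ≠ 0
    · exact ⟨q, le_rfl, rfl, Or.inr h0, by simp⟩
    push Not at h0
    obtain ⟨q', h1, h2, h3, h4⟩ := ih q.eraseLead (card_support_eraseLead' hq)
    refine ⟨q', h1.trans ((eraseLead_natDegree_le _).trans (Nat.sub_le _ _)), h2.trans (map_eraseLead_of q φ₁ h0), h3, ?_⟩
    filter_upwards [h4, signFilter_mem φ₁ q.leadingCoeff] with φ₂ h5 h6
    rw [h5]
    apply map_eraseLead_of
    rw [h0, sign_zero, sign_eq_zero_iff] at h6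
    exact h6

/-- the pairs of images -/
def pairImg (φ₁ : D →+* K₁) (φ₂ : D →+* K₂) (P : Finset D[X]) : Set (K₁[X] × K₂[X]) :=
  (fun p => (p.map φ₁, p.map φ₂)) '' (P : Set D[X])

theorem mem_pairImg {φ₁ : D →+* K₁} {φ₂ : D →+* K₂} {P : Finset D[X]} {p : D[X]} (hp : p ∈ P) :
    (p.map φ₁, p.map φ₂) ∈ pairImg φ₁ φ₂ P := ⟨p, hp, rfl⟩

theorem pairImg_mono {φ₁ : D →+* K₁} {φ₂ : D →+* K₂} {P Q : Finset D[X]} (h : P ⊆ Q) :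
    pairImg φ₁ φ₂ P ⊆ pairImg φ₁ φ₂ Q := Set.image_mono (by exact_mod_cast h)

theorem sign_of_pseudo {K : Type*} [Field K] [LinearOrder K] [IsStrictOrderedRing K]
    (φ : D →+* K) {p q s r : D[X]} {l : D} {e : ℕ}
    (h : C l ^ (2 * e) * p = q * s + r) (hl : φ l ≠ 0) {x : K} (hx : (q.map φ).eval x = 0) :
    SignType.sign ((p.map φ).eval x) = SignType.sign ((r.map φ).eval x) := by
  have h1 := congrArg (fun g => (g.map φ).eval x) h
  simp only [Polynomial.map_mul, Polynomial.map_add, Polynomial.map_pow, map_C, eval_mul, eval_add,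
    eval_pow, eval_C, hx, zero_mul, zero_add] at h1
  rw [← h1, sign_mul, pow_mul, sign_pos (pow_pos (by positivity) e), one_mul]

theorem sign_table (hK₁ : PolyIVT K₁) (hK₂ : PolyIVT K₂) (φ₁ : D →+* K₁) : ∀ (n : ℕ)
    (P : Finset D[X]), (∀ p ∈ P, p.natDegree < n) → ∀ᶠ φ₂ in signFilter K₂ φ₁,
      ∃ Z, IsChainRel Z ∧ SignsMatch Z (pairImg φ₁ φ₂ P) := by
  classical
  intro n
  induction n with
  | zero =>
    intro P hP
    refine Filter.Eventually.of_forall fun φ₂ => ⟨∅, ?_, ?_⟩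
    · intro z hz; simp at hz
    · rintro x y - q ⟨p, hp, rfl⟩
      exact absurd (hP p hp) (by simp)
  | succ n ihn =>
    choose nm nm1 nm2 nm3 nm4 using fun q : D[X] => exists_normal (K₂ := K₂) φ₁ _ q rfl
    have main : ∀ (Q : Finset D[X]), (∀ p ∈ Q, p.natDegree ≤ n) → ∀ (low : Finset D[X]),
        (∀ p ∈ low, p.natDegree < n) → ∀ᶠ φ₂ in signFilter K₂ φ₁,
        ∃ Z, IsChainRel Z ∧ SignsMatch Z (pairImg φ₁ φ₂ (low ∪ Q)) := by
      intro Q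
      induction Q using Finset.induction_on with
      | empty => intro _ low hlow; simpa using ihn low hlow
      | insert p Q hpQ ih =>
        intro hQ low hlow
        have ih' := ih (fun q hq => hQ q (Finset.mem_insert_of_mem hq))
        have hpn := hQ p (Finset.mem_insert_self _ _)
        have hpt := (nm1 p).trans hpn
        rcases hpt.lt_or_eq with hlt | heq
        · filter_upwards [ih' (insert (nm p) low) (by
            intro q hq
            rcases Finset.mem_insert.1 hq with rfl | hq
            · exact hlt
            · exact hlow q hq), nm4 p] with φ₂ ⟨Z, hZ, hm⟩ hmp
          refine ⟨Z, hZ, ?_⟩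
          rintro x y hxy q ⟨g, hg, rfl⟩
          have hg' : g ∈ low ∪ insert p Q := hg
          simp only [Finset.mem_union, Finset.mem_insert] at hg'
          by_cases hgp : g = p
          · subst hgp
            simp only
            rw [← nm2 g, ← hmp]
            exact hm x y hxy _ (mem_pairImg (p := nm g) (by simp))
          · exact hm x y hxy _ (mem_pairImg (p := g) (by simp; tauto))
        rcases Nat.eq_zero_or_pos n with hn0 | hn0
        · obtain ⟨a, ha⟩ := natDegree_eq_zero.1 (by omega : p.natDegree = 0)
          filter_upwards [ih' low hlow, signFilter_mem φ₁ a] with φ₂ ⟨Z, hZ, hm⟩ hsa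
          refine ⟨Z, hZ, ?_⟩
          rintro x y hxy q ⟨g, hg, rfl⟩
          have hg' : g ∈ low ∪ insert p Q := hg
          simp only [Finset.mem_union, Finset.mem_insert] at hg'
          by_cases hgp : g = p
          · simp [hgp, ← ha, hsa]
          · exact hm x y hxy _ (mem_pairImg (p := g) (by simp; tauto))
        -- the main case
        set pt := nm p with hptdef
        have hpt0 : pt ≠ 0 := by intro h; rw [h] at heq; simp at heq; omega
        have hlc := (nm3 p).resolve_left hpt0
        have hrex : ∀ q : D[X], ∃ r : D[X], (0 < (nm q).natDegree → r.natDegree < (nm q).natDegree ∧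
            ∃ (e : ℕ) (s : D[X]), C (nm q).leadingCoeff ^ (2 * e) * pt = nm q * s + r) ∧
            ((nm q).natDegree = 0 → r = 0) := by
          intro q
          rcases Nat.eq_zero_or_pos (nm q).natDegree with h | h
          · exact ⟨0, fun h' => by omega, fun _ => rfl⟩
          · obtain ⟨e, s, r, h1, h2⟩ := pseudo_div_even (nm q) h pt
            exact ⟨r, fun _ => ⟨h2, e, s, h1⟩, fun h' => by omega⟩
        choose rem hrem1 hrem2 using hrex
        set der := derivative pt with hder
        have hderdeg : der.natDegree < n := by
          rw [← heq]; exact natDegree_derivative_lt (by omega)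
        set Q₀ := low ∪ Q ∪ {der} with hQ₀
        have hQ₀deg : ∀ q ∈ Q₀, q.natDegree ≤ n := by
          intro q hq
          simp only [hQ₀, Finset.mem_union, Finset.mem_singleton] at hq
          rcases hq with (hq | hq) | rfl
          · exact (hlow q hq).le
          · exact hQ q (Finset.mem_insert_of_mem hq)
          · exact hderdeg.le
        have hremdeg : ∀ q ∈ Q₀, (rem q).natDegree < n := by
          intro q hq
          rcases Nat.eq_zero_or_pos (nm q).natDegree with h | h
          · rw [hrem2 q h]; simpa using hn0
          · exact (hrem1 q h).1.trans_le ((nm1 q).trans (hQ₀deg q hq))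
        have hev := ih' (low ∪ {der} ∪ Q₀.image rem) (by
          intro q hq
          simp only [Finset.mem_union, Finset.mem_singleton, Finset.mem_image] at hq
          rcases hq with (hq | rfl) | ⟨g, hg, rfl⟩
          · exact hlow q hq
          · exact hderdeg
          · exact hremdeg g hg)
        have hev2 : ∀ᶠ φ₂ in signFilter K₂ φ₁, ∀ q ∈ Q₀, (nm q).map φ₂ = q.map φ₂ ∧
            SignType.sign (φ₂ (nm q).leadingCoeff) = SignType.sign (φ₁ (nm q).leadingCoeff) := by
          rw [Filter.eventually_all_finset]
          intro q _
          exact (nm4 q).and (signFilter_mem φ₁ _)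
        filter_upwards [hev, hev2, nm4 p, signFilter_mem φ₁ pt.leadingCoeff] with
          φ₂ ⟨Z, hZ, hm⟩ hn2 hmp hs
        have hlc2 : φ₂ pt.leadingCoeff ≠ 0 := by
          intro h
          rw [h, sign_zero] at hs
          exact hlc (sign_eq_zero_iff.1 hs.symm)
        have hd1 : (pt.map φ₁).natDegree = pt.natDegree := natDegree_map_of_leadingCoeff_ne_zero φ₁ hlc
        have hd2 : (pt.map φ₂).natDegree = pt.natDegree := natDegree_map_of_leadingCoeff_ne_zero φ₂ hlc2
        have hsub : Q₀ ⊆ low ∪ {der} ∪ Q₀.image rem ∪ Q := by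
          intro q hq
          simp only [hQ₀, Finset.mem_union, Finset.mem_singleton] at hq ⊢
          tauto
        obtain ⟨Z', hZ', hm'⟩ := match_step hK₁ hK₂ hZ (Q := pairImg φ₁ φ₂ Q₀)
          (pairImg_mono hsub) hm (pt.map φ₁) (pt.map φ₂)
          (by intro h; rw [h, natDegree_zero] at hd2; omega) (hd1.trans hd2.symm)
          (by rw [leadingCoeff_map_of_leadingCoeff_ne_zero φ₁ hlc,
                leadingCoeff_map_of_leadingCoeff_ne_zero φ₂ hlc2]; exact hs.symm)
          (by rw [derivative_map, derivative_map]
              exact mem_pairImg (Finset.mem_union_right _ (Finset.mem_singleton_self _)))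
          (by intro h
              have := natDegree_eq_zero_of_derivative_eq_zero h
              omega)
          (by
            rintro _ ⟨q, hq, rfl⟩ hq0 x y hx hy
            simp only at hq0 hx hy
            obtain ⟨hq1, hq2⟩ := hn2 q hq
            have hqn : nm q ≠ 0 := by
              intro h; rw [← nm2 q, h] at hq0; simp at hq0
            have hl1 := (nm3 q).resolve_left hqn
            rw [← nm2 q] at hq0 hx
            rw [← hq1] at hy
            have hpos : 0 < (nm q).natDegree := by
              rcases Nat.eq_zero_or_pos (nm q).natDegree with h | h
              · obtain ⟨a, ha⟩ := natDegree_eq_zero.1 h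
                rw [← ha] at hx hq0
                simp at hx hq0
                exact absurd hx hq0
              · exact h
            obtain ⟨-, e, s, hes⟩ := hrem1 q hpos
            refine ⟨_, mem_pairImg (p := rem q) ?_, sign_of_pseudo φ₁ hes hl1 hx,
              sign_of_pseudo φ₂ hes ?_ hy⟩
            · simp only [Finset.mem_union, Finset.mem_image]
              exact Or.inl (Or.inr ⟨q, hq, rfl⟩)
            · intro h
              rw [h, sign_zero] at hq2
              exact hl1 (sign_eq_zero_iff.1 hq2.symm))
        refine ⟨Z', hZ', ?_⟩
        rintro x y hxy q ⟨g, hg, rfl⟩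
        have hg' : g ∈ low ∪ insert p Q := hg
        simp only [Finset.mem_union, Finset.mem_insert] at hg'
        by_cases hgp : g = p
        · subst hgp
          simp only
          rw [← nm2 g, ← hmp]
          exact hm' x y hxy _ (Set.mem_insert _ _)
        · exact hm' x y hxy _ (Set.mem_insert_of_mem _ (mem_pairImg (p := g) (by simp [hQ₀]; tauto)))
    intro P hP
    simpa using main P (fun p hp => Nat.lt_succ_iff.1 (hP p hp)) ∅ (by simp)

theorem eval_finSucc {F K : Type*} [Field F] [Field K] {n : ℕ} (ι : F →+* K) (v : Fin (n + 1) → K)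
    (p : MvPolynomial (Fin (n + 1)) F) : MvPolynomial.eval₂Hom ι v p =
    ((MvPolynomial.finSuccEquiv F n p).map
      (MvPolynomial.eval₂Hom ι (fun i => v i.succ))).eval (v 0) := by
  induction p using MvPolynomial.induction_on with
  | C r => simp [MvPolynomial.finSuccEquiv_apply]
  | add p q hp hq => simp only [map_add, Polynomial.map_add, eval_add, hp, hq]
  | mul_X p i hp =>
    simp only [map_mul, Polynomial.map_mul, eval_mul, hp]
    congr 1
    refine Fin.cases ?_ (fun i => ?_) i <;> simp [MvPolynomial.finSuccEquiv_X_zero, MvPolynomial.finSuccEquiv_X_succ]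

/-- Transfer of sign conditions. -/
theorem sign_transfer (hK₁ : PolyIVT K₁) (hK₂ : PolyIVT K₂) {F : Type*} [Field F]
    (ι₁ : F →+* K₁) (ι₂ : F →+* K₂) (hι : ∀ r, SignType.sign (ι₁ r) = SignType.sign (ι₂ r)) :
    ∀ (n : ℕ) (a : Fin n → K₁) (S : Finset (MvPolynomial (Fin n) F)),
      ∃ b : Fin n → K₂, ∀ p ∈ S, SignType.sign (MvPolynomial.eval₂Hom ι₂ b p) =
        SignType.sign (MvPolynomial.eval₂Hom ι₁ a p) := by
  classical
  intro n
  induction n with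
  | zero =>
    intro a S
    refine ⟨Fin.elim0, fun p _ => ?_⟩
    obtain ⟨r, rfl⟩ := MvPolynomial.C_surjective (Fin 0) p
    simp [hι]
  | succ n ih =>
    intro a S
    let P : Finset (MvPolynomial (Fin n) F)[X] := S.image (MvPolynomial.finSuccEquiv F n)
    obtain ⟨T, hT⟩ := signFilter_exists (sign_table (K₂ := K₂) hK₁ hK₂
      (MvPolynomial.eval₂Hom ι₁ (fun i => a i.succ)) (P.sup natDegree + 1) P
      (fun p hp => Nat.lt_succ_iff.2 (Finset.le_sup (f := natDegree) hp)))
    obtain ⟨b, hb⟩ := ih (fun i => a i.succ) T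
    obtain ⟨Z, hZ, hm⟩ := hT _ hb
    obtain ⟨y, hy⟩ := hZ.across (a 0)
    refine ⟨Fin.cons y b, fun p hp => ?_⟩
    rw [eval_finSucc ι₁, eval_finSucc ι₂]
    have := hm _ _ hy _ (mem_pairImg (p := MvPolynomial.finSuccEquiv F n p)
      (Finset.mem_image_of_mem _ hp))
    simpa using this.symm

end Transfer

end Part3

section Part4
set_option linter.unusedSectionVars false
open Polynomial

/-- preorderings as sets -/
structure IsPre {R : Type*} [CommRing R] (P : Set R) : Prop where
  sq : ∀ a, a ^ 2 ∈ P
  add : ∀ {a b}, a ∈ P → b ∈ P → a + b ∈ P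
  mul : ∀ {a b}, a ∈ P → b ∈ P → a * b ∈ P

namespace IsPre
variable {R : Type*} [CommRing R] {P : Set R}

theorem one (h : IsPre P) : (1 : R) ∈ P := by simpa using h.sq 1
theorem zero (h : IsPre P) : (0 : R) ∈ P := by simpa using h.sq 0

theorem adjoin (h : IsPre P) (a : R) : IsPre {x | ∃ p ∈ P, ∃ q ∈ P, x = p + a * q} where
  sq b := ⟨b ^ 2, h.sq b, 0, h.zero, by simp⟩
  add := by
    rintro _ _ ⟨p, hp, q, hq, rfl⟩ ⟨p', hp', q', hq', rfl⟩
    exact ⟨p + p', h.add hp hp', q + q', h.add hq hq', by ring⟩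
  mul := by
    rintro _ _ ⟨p, hp, q, hq, rfl⟩ ⟨p', hp', q', hq', rfl⟩
    exact ⟨p * p' + a ^ 2 * (q * q'), h.add (h.mul hp hp') (h.mul (h.sq a) (h.mul hq hq')),
      p * q' + q * p', h.add (h.mul hp hq') (h.mul hq hp'), by ring⟩

theorem exists_max (h : IsPre P) (h1 : (-1 : R) ∉ P) : ∃ M : Set R, P ⊆ M ∧ IsPre M ∧
    (-1 : R) ∉ M ∧ ∀ a, a ∉ M → ∃ p ∈ M, ∃ q ∈ M, (-1 : R) = p + a * q := by
  obtain ⟨M, hPM, hM⟩ := zorn_subset_nonempty {Q : Set R | IsPre Q ∧ (-1 : R) ∉ Q} (by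
    intro c hc hch hne
    refine ⟨⋃₀ c, ⟨⟨?_, ?_, ?_⟩, ?_⟩, fun s hs => Set.subset_sUnion_of_mem hs⟩
    · intro a
      obtain ⟨s, hs⟩ := hne
      exact ⟨s, hs, (hc hs).1.sq a⟩
    · rintro a b ⟨s, hs, ha⟩ ⟨t, ht, hb⟩
      rcases hch.total hs ht with hst | hst
      · exact ⟨t, ht, (hc ht).1.add (hst ha) hb⟩
      · exact ⟨s, hs, (hc hs).1.add ha (hst hb)⟩
    · rintro a b ⟨s, hs, ha⟩ ⟨t, ht, hb⟩
      rcases hch.total hs ht with hst | hst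
      · exact ⟨t, ht, (hc ht).1.mul (hst ha) hb⟩
      · exact ⟨s, hs, (hc hs).1.mul ha (hst hb)⟩
    · rintro ⟨s, hs, h⟩
      exact (hc hs).2 h) P ⟨h, h1⟩
  refine ⟨M, hPM, hM.prop.1, hM.prop.2, ?_⟩
  intro a ha
  by_contra hcon
  have hmem : {x | ∃ p ∈ M, ∃ q ∈ M, x = p + a * q} ∈ {Q : Set R | IsPre Q ∧ (-1 : R) ∉ Q} :=
    ⟨hM.prop.1.adjoin a, hcon⟩
  have hle : M ⊆ {x | ∃ p ∈ M, ∃ q ∈ M, x = p + a * q} :=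
    fun x hx => ⟨x, hx, 0, hM.prop.1.zero, by simp⟩
  exact ha (hM.le_of_ge hmem hle ⟨0, hM.prop.1.zero, 1, hM.prop.1.one, by simp⟩)

theorem max_total (h : IsPre P) (h1 : (-1 : R) ∉ P)
    (hm : ∀ a, a ∉ P → ∃ p ∈ P, ∃ q ∈ P, (-1 : R) = p + a * q) (a : R) : a ∈ P ∨ -a ∈ P := by
  by_contra hcon
  push Not at hcon
  obtain ⟨p, hp, q, hq, e1⟩ := hm a hcon.1
  obtain ⟨p', hp', q', hq', e2⟩ := hm (-a) hcon.2
  apply h1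
  have : (-1 : R) = p + p' + p * p' + a ^ 2 * (q * q') := by
    linear_combination (a * q') * e1 + (1 + p) * e2
  rw [this]
  exact h.add (h.add (h.add hp hp') (h.mul hp hp')) (h.mul (h.sq a) (h.mul hq hq'))

theorem max_prime_aux (h : IsPre P) (h1 : (-1 : R) ∉ P)
    (hm : ∀ a, a ∉ P → ∃ p ∈ P, ∃ q ∈ P, (-1 : R) = p + a * q) {a b : R} (ha : a ∉ P) (hb : b ∉ P)
    (hab : -(a * b) ∈ P) : False := by
  obtain ⟨p, hp, q, hq, e1⟩ := hm a ha
  obtain ⟨p', hp', q', hq', e2⟩ := hm b hb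
  apply h1
  have : (-1 : R) = p + p' + p * p' + (-(a * b)) * (q * q') := by
    linear_combination (-b * q') * e1 + (1 + p) * e2
  rw [this]
  exact h.add (h.add (h.add hp hp') (h.mul hp hp')) (h.mul hab (h.mul hq hq'))

def supp (h : IsPre P) (ht : ∀ a, a ∈ P ∨ -a ∈ P) : Ideal R where
  carrier := {a | a ∈ P ∧ -a ∈ P}
  zero_mem' := ⟨h.zero, by simpa using h.zero⟩
  add_mem' := by
    rintro a b ⟨h1, h2⟩ ⟨h3, h4⟩
    exact ⟨h.add h1 h3, by rw [neg_add]; exact h.add h2 h4⟩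
  smul_mem' := by
    rintro c a ⟨h1, h2⟩
    rcases ht c with hc | hc
    · exact ⟨h.mul hc h1, by simpa using h.mul hc h2⟩
    · exact ⟨by simpa using h.mul hc h2, by simpa using h.mul hc h1⟩

theorem supp_prime (h : IsPre P) (h1 : (-1 : R) ∉ P) (ht : ∀ a, a ∈ P ∨ -a ∈ P)
    (hm : ∀ a, a ∉ P → ∃ p ∈ P, ∃ q ∈ P, (-1 : R) = p + a * q) : (h.supp ht).IsPrime := by
  refine ⟨?_, ?_⟩
  · intro htop
    have : (1 : R) ∈ h.supp ht := htop ▸ Submodule.mem_top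
    exact h1 this.2
  · rintro a b ⟨hab, hab'⟩
    by_contra hcon
    push Not at hcon
    have hn : ∀ x, x ∉ h.supp ht → x ∉ P ∨ -x ∉ P := by
      intro x hx
      by_contra hc
      push Not at hc
      exact hx hc
    rcases hn a hcon.1 with ha | ha <;> rcases hn b hcon.2 with hb | hb
    · exact h.max_prime_aux h1 hm ha hb hab'
    · exact h.max_prime_aux h1 hm ha hb (by simpa using hab)
    · exact h.max_prime_aux h1 hm ha hb (by simpa using hab)
    · exact h.max_prime_aux h1 hm ha hb (by simpa using hab')

theorem exists_order {K : Type*} [Field K] {P : Set K} (h : IsPre P) (h1 : (-1 : K) ∉ P) :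
    ∃ (_ : LinearOrder K) (_ : IsStrictOrderedRing K), ∀ p ∈ P, 0 ≤ p := by
  classical
  obtain ⟨M, hPM, hM, hM1, hm⟩ := h.exists_max h1
  have ht := hM.max_total hM1 hm
  have h0 : ∀ a ∈ M, -a ∈ M → a = 0 := by
    intro a ha ha'
    by_contra h0
    apply hM1
    have := hM.mul (hM.mul ha ha') (hM.sq a⁻¹)
    have e : a * -a * a⁻¹ ^ 2 = -1 := by field_simp
    rwa [e] at this
  let lo : LinearOrder K :=
    { le := fun a b => b - a ∈ M
      le_refl := fun a => by simpa using hM.zero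
      le_trans := fun a b c hab hbc => by
        have := hM.add hab hbc
        rwa [show b - a + (c - b) = c - a by ring] at this
      le_antisymm := fun a b hab hba => by
        have := h0 (b - a) hab (by simpa using hba)
        exact (sub_eq_zero.1 this).symm
      le_total := fun a b => by
        have := ht (b - a)
        simpa using this
      toDecidableLE := fun _ _ => Classical.propDecidable _ }
  have hle : ∀ a b : K, a ≤ b ↔ b - a ∈ M := fun a b => Iff.rfl
  have oa : IsOrderedAddMonoid K :=
    { add_le_add_left := fun a b hab c => by rw [hle] at hab ⊢; simpa using hab }
  have z : ZeroLEOneClass K := ⟨by rw [hle]; simpa using hM.one⟩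
  have oo : IsOrderedRing K := .of_mul_nonneg fun a b ha hb => by
    rw [hle] at ha hb ⊢
    simpa using hM.mul (by simpa using ha) (by simpa using hb)
  exact ⟨lo, IsOrderedRing.toIsStrictOrderedRing K, fun p hp => by
    rw [hle]; simpa using hPM hp⟩

end IsPre

section RCExt
variable {F : Type*} [Field F] (P : Set F)

/-- the cone generated in an extension -/
noncomputable def extCone (K : IntermediateField F (AlgebraicClosure F)) : AddSubmonoid (AlgebraicClosure F) :=
  AddSubmonoid.closure {x | ∃ p ∈ P, ∃ k ∈ K, x = algebraMap F _ p * k ^ 2}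

variable {P}
theorem extCone_mono {K K' : IntermediateField F (AlgebraicClosure F)} (h : K ≤ K') :
    extCone P K ≤ extCone P K' :=
  AddSubmonoid.closure_mono (by rintro x ⟨p, hp, k, hk, rfl⟩; exact ⟨p, hp, k, h hk, rfl⟩)

theorem extCone_mul (hP : IsPre P) {K : IntermediateField F (AlgebraicClosure F)}
    {x y : AlgebraicClosure F} (hx : x ∈ extCone P K) (hy : y ∈ extCone P K) :
    x * y ∈ extCone P K := by
  unfold extCone at hx hy ⊢
  induction hx using AddSubmonoid.closure_induction with
  | zero => simp
  | add a b _ _ ha hb => rw [add_mul]; exact add_mem ha hb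
  | mem a ha =>
    induction hy using AddSubmonoid.closure_induction with
    | zero => simp
    | add c d _ _ hc hd => rw [mul_add]; exact add_mem hc hd
    | mem c hc =>
      obtain ⟨p, hp, k, hk, rfl⟩ := ha
      obtain ⟨p', hp', k', hk', rfl⟩ := hc
      apply AddSubmonoid.subset_closure
      exact ⟨p * p', hP.mul hp hp', k * k', mul_mem hk hk', by rw [map_mul]; ring⟩

theorem extCone_bot (hP : IsPre P) (h1 : (-1 : F) ∉ P) : (-1 : AlgebraicClosure F) ∉ extCone P ⊥ := by
  intro h
  have key : ∀ x ∈ extCone P ⊥, ∃ p ∈ P, algebraMap F (AlgebraicClosure F) p = x := by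
    intro x hx
    unfold extCone at hx
    induction hx using AddSubmonoid.closure_induction with
    | zero => exact ⟨0, hP.zero, by simp⟩
    | add a b _ _ ha hb =>
      obtain ⟨p, hp, rfl⟩ := ha
      obtain ⟨q, hq, rfl⟩ := hb
      exact ⟨p + q, hP.add hp hq, by simp⟩
    | mem a ha =>
      obtain ⟨p, hp, k, hk, rfl⟩ := ha
      obtain ⟨k, rfl⟩ := IntermediateField.mem_bot.1 hk
      exact ⟨p * k ^ 2, hP.mul hp (hP.sq k), by simp⟩
  obtain ⟨p, hp, e⟩ := key _ h
  have : p = -1 := (algebraMap F (AlgebraicClosure F)).injective (by simpa using e)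
  exact h1 (this ▸ hp)

theorem extCone_max (hP : IsPre P) (h1 : (-1 : F) ∉ P) :
    ∃ K : IntermediateField F (AlgebraicClosure F), (-1 : AlgebraicClosure F) ∉ extCone P K ∧
      ∀ K', K ≤ K' → (-1 : AlgebraicClosure F) ∉ extCone P K' → K' ≤ K := by
  obtain ⟨K, -, hK⟩ := zorn_le_nonempty₀
    {K : IntermediateField F (AlgebraicClosure F) | (-1 : AlgebraicClosure F) ∉ extCone P K} (by
    intro c hc hch y hy
    have hne : Nonempty c := ⟨⟨y, hy⟩⟩
    have hdir : Directed (· ≤ ·) (fun K : c => (K : IntermediateField F (AlgebraicClosure F))) :=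
      hch.directed
    refine ⟨⨆ K : c, (K : IntermediateField F (AlgebraicClosure F)), ?_, fun z hz =>
      le_iSup (fun K : c => (K : IntermediateField F (AlgebraicClosure F))) ⟨z, hz⟩⟩
    have key : ∀ x ∈ extCone P (⨆ K : c, (K : IntermediateField F (AlgebraicClosure F))),
        ∃ K ∈ c, x ∈ extCone P K := by
      intro x hx
      unfold extCone at hx
      induction hx using AddSubmonoid.closure_induction with
      | zero => exact ⟨y, hy, zero_mem _⟩
      | add a b _ _ ha hb =>
        obtain ⟨K, hK, ha⟩ := ha
        obtain ⟨K', hK', hb⟩ := hb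
        rcases hch.total hK hK' with h | h
        · exact ⟨K', hK', add_mem (extCone_mono h ha) hb⟩
        · exact ⟨K, hK, add_mem ha (extCone_mono h hb)⟩
      | mem a ha =>
        obtain ⟨p, hp, k, hk, rfl⟩ := ha
        rw [← SetLike.mem_coe, IntermediateField.coe_iSup_of_directed hdir, Set.mem_iUnion] at hk
        obtain ⟨K, hk⟩ := hk
        exact ⟨K, K.2, AddSubmonoid.subset_closure ⟨p, hp, k, hk, rfl⟩⟩
    intro h
    obtain ⟨K, hK, h'⟩ := key _ h
    exact hc hK h') ⊥ (extCone_bot hP h1)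
  exact ⟨K, hK.prop, fun K' hle hK' => hK.le_of_ge hK' hle⟩

section aux
variable {K : Type*} [Field K] [LinearOrder K] [IsStrictOrderedRing K]
theorem ivt_aux1 {g h v w : K} (hg : g * h < 0) (h1 : 0 < g * v) (h2 : 0 < h * w) : v * w < 0 := by
  by_contra hc
  push Not at hc
  have := mul_pos h1 h2
  have h3 : g * v * (h * w) = g * h * (v * w) := by ring
  rw [h3] at this
  exact absurd (mul_nonpos_of_nonpos_of_nonneg hg.le hc) (not_le.2 this)

theorem ivt_aux3 {a b c d : K} (hg : a * b * (c * d) < 0) : a * c < 0 ∨ b * d < 0 := by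
  by_contra hc
  push Not at hc
  have := mul_nonneg hc.1 hc.2
  have h3 : a * c * (b * d) = a * b * (c * d) := by ring
  rw [h3] at this
  exact absurd this (not_le.2 hg)

theorem ivt_aux2 {a b k c : K} (hab : a < b) (h : (a - k) * (b - k) * c ^ 2 < 0) : a < k ∧ k < b := by
  have hfin' : (a - k) * (b - k) < 0 := by
    by_contra hc
    push Not at hc
    exact absurd (mul_nonneg hc (sq_nonneg c)) (not_le.2 h)
  constructor
  · by_contra hc
    push Not at hc
    nlinarith [mul_nonneg (sub_nonneg.2 hc) (sub_nonneg.2 (hc.trans hab.le))]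
  · by_contra hc
    push Not at hc
    nlinarith [mul_nonneg (sub_nonneg.2 hc) (sub_nonneg.2 (hab.le.trans hc))]
end aux

set_option maxHeartbeats 2000000 in
theorem exists_realClosed (hP : IsPre P) (h1 : (-1 : F) ∉ P) :
    ∃ (K : IntermediateField F (AlgebraicClosure F)) (_ : LinearOrder K) (_ : IsStrictOrderedRing K),
      PolyIVT K ∧ ∀ p ∈ P, 0 ≤ algebraMap F K p := by
  obtain ⟨K, hK, hmax⟩ := extCone_max hP h1
  have hpre : IsPre {x : K | (x : AlgebraicClosure F) ∈ extCone P K} :=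
    { sq := fun a => AddSubmonoid.subset_closure ⟨1, hP.one, a, a.2, by simp⟩
      add := fun ha hb => (extCone P K).add_mem ha hb
      mul := fun ha hb => extCone_mul hP ha hb }
  obtain ⟨lo, so, hpos⟩ := hpre.exists_order (by simpa using hK)
  have hposP : ∀ p ∈ P, 0 ≤ algebraMap F K p := by
    intro p hp
    apply hpos
    exact AddSubmonoid.subset_closure ⟨p, hp, 1, one_mem _, by simp⟩
  refine ⟨K, lo, so, ?_, hposP⟩
  have main : ∀ (n : ℕ) (g : K[X]), g.natDegree = n → ∀ a b : K, a < b →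
      g.eval a * g.eval b < 0 → ∃ c, a < c ∧ c < b ∧ g.eval c = 0 := by
    intro n
    induction n using Nat.strong_induction_on with
    | _ n ih =>
      intro g hgn a b hab hg
      have hg0 : g ≠ 0 := by rintro rfl; simp at hg
      have hn0 : 0 < n := by
        rw [← hgn]
        apply Nat.pos_of_ne_zero
        intro h
        obtain ⟨c, rfl⟩ := natDegree_eq_zero.1 h
        simp only [eval_C] at hg
        exact absurd (mul_self_nonneg c) (not_le.2 hg)
      by_cases hirr : Irreducible g
      swap
      · have hnu : ¬ IsUnit g := fun h => by
          have := natDegree_eq_zero_of_isUnit h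
          omega
        rw [irreducible_iff] at hirr
        push Not at hirr
        obtain ⟨g₁, g₂, rfl, hu₁, hu₂⟩ := hirr hnu
        have hg₁ : g₁ ≠ 0 := left_ne_zero_of_mul hg0
        have hg₂ : g₂ ≠ 0 := right_ne_zero_of_mul hg0
        have hd₁ : 0 < g₁.natDegree := Nat.pos_of_ne_zero fun h => by
          obtain ⟨c, rfl⟩ := natDegree_eq_zero.1 h
          exact hu₁ (isUnit_C.2 (isUnit_iff_ne_zero.2 (by rintro rfl; simp at hg₁)))
        have hd₂ : 0 < g₂.natDegree := Nat.pos_of_ne_zero fun h => by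
          obtain ⟨c, rfl⟩ := natDegree_eq_zero.1 h
          exact hu₂ (isUnit_C.2 (isUnit_iff_ne_zero.2 (by rintro rfl; simp at hg₂)))
        rw [natDegree_mul hg₁ hg₂] at hgn
        simp only [eval_mul] at hg
        have hcase : g₁.eval a * g₁.eval b < 0 ∨ g₂.eval a * g₂.eval b < 0 := ivt_aux3 hg
        rcases hcase with h | h
        · obtain ⟨c, h1, h2, h3⟩ := ih _ (by omega) g₁ rfl a b hab h
          exact ⟨c, h1, h2, by simp [h3]⟩
        · obtain ⟨c, h1, h2, h3⟩ := ih _ (by omega) g₂ rfl a b hab h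
          exact ⟨c, h1, h2, by simp [h3]⟩
      obtain ⟨α, hα⟩ := IsAlgClosed.exists_aeval_eq_zero (AlgebraicClosure F) g (by
        intro h
        have : g.natDegree = 0 := natDegree_eq_of_degree_eq_some (n := 0) h
        omega)
      have hdvd : ∀ f : K[X], aeval α f = 0 → g ∣ f := by
        intro f hf
        have h1 := minpoly.dvd K α hf
        rw [← minpoly.eq_of_irreducible hirr hα] at h1
        exact (dvd_mul_right _ _).trans h1
      have halg : IsAlgebraic K α := ⟨g, hg0, hα⟩
      let K' : IntermediateField F (AlgebraicClosure F) :=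
        (IntermediateField.adjoin K {α}).restrictScalars F
      have hKK' : K ≤ K' := by
        intro x hx
        exact (IntermediateField.adjoin K {α}).algebraMap_mem ⟨x, hx⟩
      have hαK' : α ∈ K' := IntermediateField.mem_adjoin_simple_self K α
      have hrep : ∀ k ∈ K', ∃ f : K[X], f.natDegree < n ∧ aeval α f = k := by
        intro k hk
        have hk' : k ∈ (IntermediateField.adjoin K {α}).toSubalgebra := hk
        rw [IntermediateField.adjoin_simple_toSubalgebra_of_isAlgebraic halg,
          Algebra.adjoin_singleton_eq_range_aeval] at hk'
        obtain ⟨f, hf⟩ := hk'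
        refine ⟨f % g, ?_, ?_⟩
        · rw [← hgn]; exact natDegree_mod_lt f (by omega)
        · have hf' : aeval α f = k := hf
          rw [← hf']
          conv_rhs => rw [← EuclideanDomain.div_add_mod f g]
          simp [hα]
      have hgood : (-1 : AlgebraicClosure F) ∉ extCone P K' := by
        intro hcon
        have key : ∀ x ∈ extCone P K', ∃ s : K[X], aeval α s = x ∧ s.natDegree ≤ 2 * (n - 1) ∧
            ∀ c, 0 ≤ s.eval c := by
          intro x hx
          unfold extCone at hx
          induction hx using AddSubmonoid.closure_induction with
          | zero => exact ⟨0, by simp, by simp, by simp⟩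
          | add a b _ _ ha hb =>
            obtain ⟨s, h1, h2, h3⟩ := ha
            obtain ⟨t, h4, h5, h6⟩ := hb
            exact ⟨s + t, by simp [h1, h4], (natDegree_add_le _ _).trans (max_le h2 h5), fun c => by
              rw [eval_add]; exact add_nonneg (h3 c) (h6 c)⟩
          | mem a ha =>
            obtain ⟨p, hp, k, hk, rfl⟩ := ha
            obtain ⟨f, hf1, hf2⟩ := hrep k hk
            refine ⟨C (algebraMap F K p) * f ^ 2, ?_, ?_, fun c => ?_⟩
            · rw [map_mul, map_pow, hf2, aeval_C]
              rfl
            · refine (natDegree_C_mul_le _ _).trans (natDegree_pow_le.trans ?_)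
              omega
            · simp only [eval_mul, eval_C, eval_pow]
              exact mul_nonneg (hposP p hp) (sq_nonneg _)
        obtain ⟨s, h1, h2, h3⟩ := key _ hcon
        obtain ⟨w, hw⟩ := hdvd (1 + s) (by simp [h1])
        have hpos1 : ∀ c, 0 < (1 + s).eval c := fun c => by
          simp only [eval_add, eval_one]
          linarith [h3 c]
        have hw0 : w ≠ 0 := by
          rintro rfl
          have := hpos1 0
          rw [hw] at this
          simp at this
        have hdw : w.natDegree < n := by
          have h4 : (1 + s).natDegree ≤ 2 * (n - 1) :=
            (natDegree_add_le _ _).trans (max_le (by simp) h2)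
          rw [hw, natDegree_mul hg0 hw0] at h4
          omega
        have ha := hpos1 a
        have hb := hpos1 b
        rw [hw, eval_mul] at ha hb
        obtain ⟨c, -, -, hc⟩ := ih _ hdw w rfl a b hab (ivt_aux1 hg ha hb)
        have := hpos1 c
        rw [hw, eval_mul, hc, mul_zero] at this
        exact lt_irrefl _ this
      have hαK : α ∈ K := hmax K' hKK' hgood hαK'
      have hroot : g.eval (⟨α, hαK⟩ : K) = 0 := by
        have h2 : algebraMap K (AlgebraicClosure F) (g.eval ⟨α, hαK⟩) = 0 := by
          rw [← aeval_algebraMap_apply_eq_algebraMap_eval]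
          exact hα
        exact (algebraMap K (AlgebraicClosure F)).injective (by rw [h2, map_zero])
      obtain ⟨w, hw⟩ := dvd_iff_isRoot.2 hroot
      have hdeg := degree_eq_one_of_irreducible_of_root hirr hroot
      have hwd : w.natDegree = 0 := by
        have h5 : g.natDegree = 1 := natDegree_eq_of_degree_eq_some (n := 1) hdeg
        have hw0 : w ≠ 0 := by rintro rfl; simp at hw; exact hg0 hw
        rw [hw, natDegree_mul (X_sub_C_ne_zero _) hw0, natDegree_X_sub_C] at h5
        omega
      obtain ⟨c, rfl⟩ := natDegree_eq_zero.1 hwd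
      have hfin : (a - ⟨α, hαK⟩) * (b - ⟨α, hαK⟩) * c ^ 2 < 0 := by
        rw [hw] at hg
        simp only [eval_mul, eval_sub, eval_X, eval_C] at hg
        calc _ = _ := by ring
          _ < 0 := hg
      exact ⟨⟨α, hαK⟩, (ivt_aux2 hab hfin).1, (ivt_aux2 hab hfin).2, hroot⟩
  exact fun p a b => main _ p rfl a b

end RCExt

end Part4

section Part5
set_option linter.unusedSectionVars false
open Polynomial

theorem polyIVT_real : PolyIVT ℝ := by
  intro p a b hab h
  have hc : ContinuousOn (fun x => p.eval x) (Set.Icc a b) := p.continuous.continuousOn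
  rcases mul_neg_iff.1 h with ⟨h1, h2⟩ | ⟨h1, h2⟩
  · obtain ⟨c, hc, h3⟩ := intermediate_value_Ioo' hab.le hc (show (0 : ℝ) ∈ Set.Ioo _ _ from ⟨h2, h1⟩)
    exact ⟨c, hc.1, hc.2, h3⟩
  · obtain ⟨c, hc, h3⟩ := intermediate_value_Ioo hab.le hc (show (0 : ℝ) ∈ Set.Ioo _ _ from ⟨h1, h2⟩)
    exact ⟨c, hc.1, hc.2, h3⟩

theorem sign_realHom {K : Type*} [Field K] [LinearOrder K] [IsStrictOrderedRing K] (ι : ℝ →+* K)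
    (r : ℝ) : SignType.sign (ι r) = SignType.sign r := by
  have hpos : ∀ r : ℝ, 0 < r → 0 < ι r := by
    intro r hr
    have h0 : ι r ≠ 0 := by rw [Ne, map_eq_zero]; exact hr.ne'
    refine lt_of_le_of_ne ?_ h0.symm
    rw [← Real.sq_sqrt hr.le, map_pow]
    positivity
  rcases lt_trichotomy r 0 with h | h | h
  · have := hpos (-r) (by linarith)
    rw [map_neg] at this
    rw [sign_neg h, sign_neg (by linarith)]
  · simp [h]
  · rw [sign_pos h, sign_pos (hpos r h)]

theorem isPre_gen {A : Type*} [CommRing A] (S : Set A) : IsPre {a | IsInPreordering S a} :=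
  ⟨fun a => .sq a, fun ha hb => .add ha hb, fun ha hb => .mul ha hb⟩

/-- Existence of a real closed point. -/
theorem exists_rc_point.{u} {A : Type u} [CommRing A] {P : Set A} (hP : IsPre P) (h1 : (-1 : A) ∉ P) :
    ∃ (K : Type u) (_ : Field K) (_ : LinearOrder K) (_ : IsStrictOrderedRing K) (ψ : A →+* K),
      PolyIVT K ∧ ∀ p ∈ P, 0 ≤ ψ p := by
  obtain ⟨M, hPM, hM, hM1, hm⟩ := hP.exists_max h1
  have ht := hM.max_total hM1 hm
  have hpr := hM.supp_prime hM1 ht hm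
  set 𝔭 := hM.supp ht with h𝔭
  let φ : A →+* FractionRing (A ⧸ 𝔭) := (algebraMap (A ⧸ 𝔭) _).comp (Ideal.Quotient.mk 𝔭)
  have hφ : ∀ a, φ a = 0 ↔ a ∈ 𝔭 := by
    intro a
    rw [RingHom.comp_apply, ← map_zero (algebraMap (A ⧸ 𝔭) (FractionRing (A ⧸ 𝔭))),
      (IsFractionRing.injective (A ⧸ 𝔭) (FractionRing (A ⧸ 𝔭))).eq_iff, Ideal.Quotient.eq_zero_iff_mem]
  have hfrac : ∀ x : FractionRing (A ⧸ 𝔭), ∃ a b, b ∉ 𝔭 ∧ x * φ b = φ a := by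
    intro x
    obtain ⟨a, b, hb, rfl⟩ := IsFractionRing.div_surjective (A := A ⧸ 𝔭) x
    obtain ⟨a, rfl⟩ := Ideal.Quotient.mk_surjective a
    obtain ⟨b, rfl⟩ := Ideal.Quotient.mk_surjective b
    have hb' : b ∉ 𝔭 := by
      rw [← Ideal.Quotient.eq_zero_iff_mem]
      exact nonZeroDivisors.ne_zero hb
    refine ⟨a, b, hb', ?_⟩
    exact div_mul_cancel₀ _ (mt (hφ b).1 hb')
  let PF : Set (FractionRing (A ⧸ 𝔭)) := {x | ∃ p ∈ M, ∃ b, b ∉ 𝔭 ∧ x * (φ b) ^ 2 = φ p}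
  have hPF : IsPre PF :=
    { sq := fun x => by
        obtain ⟨a, b, hb, e⟩ := hfrac x
        exact ⟨a ^ 2, hM.sq a, b, hb, by rw [← mul_pow, e, map_pow]⟩
      add := by
        rintro x y ⟨p, hp, b, hb, e⟩ ⟨p', hp', b', hb', e'⟩
        refine ⟨p * b' ^ 2 + p' * b ^ 2, hM.add (hM.mul hp (hM.sq _)) (hM.mul hp' (hM.sq _)),
          b * b', fun h => (hpr.mem_or_mem h).elim hb hb', ?_⟩
        simp only [map_mul, map_add, map_pow, ← e, ← e']
        ring
      mul := by
        rintro x y ⟨p, hp, b, hb, e⟩ ⟨p', hp', b', hb', e'⟩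
        refine ⟨p * p', hM.mul hp hp',
          b * b', fun h => (hpr.mem_or_mem h).elim hb hb', ?_⟩
        simp only [map_mul, ← e, ← e']
        ring }
  have hPF1 : (-1 : FractionRing (A ⧸ 𝔭)) ∉ PF := by
    rintro ⟨p, hp, b, hb, e⟩
    have h2 : p + b ^ 2 ∈ 𝔭 := by
      rw [← hφ, map_add, map_pow, ← e]; ring
    have h3 : b ^ 2 ∈ 𝔭 := by
      refine ⟨hM.sq b, ?_⟩
      have := hM.add hp h2.2
      rwa [show p + -(p + b ^ 2) = -b ^ 2 by ring] at this
    exact hb (hpr.mem_of_pow_mem _ h3)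
  obtain ⟨K, lo, so, hivt, hpos⟩ := exists_realClosed hPF hPF1
  refine ⟨K, inferInstance, lo, so, (algebraMap _ K).comp φ, hivt, fun p hp => ?_⟩
  apply hpos
  exact ⟨p, hPM hp, 1, fun h => hpr.ne_top ((Ideal.eq_top_iff_one _).2 h), by simp⟩

/-- Positivstellensatz -/
theorem pss {A : Type*} [CommRing A] [Algebra ℝ A] [Algebra.FiniteType ℝ A] (S : Set A)
    (hS : S.Finite) (h : ¬ ∃ χ : A →ₐ[ℝ] ℝ, ∀ s ∈ S, 0 ≤ χ s) : IsInPreordering S (-1) := by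
  classical
  by_contra hcon
  apply h
  obtain ⟨K, _, _, _, ψ, hivt, hpos⟩ := exists_rc_point (isPre_gen S) hcon
  obtain ⟨n, π, hπ⟩ := Algebra.FiniteType.iff_quotient_mvPolynomial''.1
    (inferInstance : Algebra.FiniteType ℝ A)
  obtain ⟨G, hG⟩ := (isNoetherianRing_iff_ideal_fg _).1 (inferInstance :
    IsNoetherianRing (MvPolynomial (Fin n) ℝ)) (RingHom.ker π)
  choose lift hlift using hπ
  obtain ⟨b, hb⟩ := sign_transfer hivt polyIVT_real (ψ.comp (algebraMap ℝ A)) (RingHom.id ℝ)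
    (fun r => sign_realHom _ r) n (fun i => ψ (π (MvPolynomial.X i)))
    (G ∪ hS.toFinset.image lift)
  have hcomp : ∀ p, MvPolynomial.eval₂Hom (ψ.comp (algebraMap ℝ A))
      (fun i => ψ (π (MvPolynomial.X i))) p = ψ (π p) := by
    intro p
    have : MvPolynomial.eval₂Hom (ψ.comp (algebraMap ℝ A))
      (fun i => ψ (π (MvPolynomial.X i))) = ψ.comp (π : MvPolynomial (Fin n) ℝ →+* A) := by
      apply MvPolynomial.ringHom_ext
      · intro r
        simp [← MvPolynomial.algebraMap_eq]
      · intro i; simp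
    rw [this]; rfl
  have hev : ∀ p, MvPolynomial.eval₂Hom (RingHom.id ℝ) b p = MvPolynomial.aeval b p := fun p => rfl
  simp only [hcomp, hev] at hb
  have hker : ∀ p, π p = 0 → MvPolynomial.aeval b p = (0 : ℝ) := by
    intro p hp
    have h1 : p ∈ Ideal.span (G : Set (MvPolynomial (Fin n) ℝ)) := by rw [hG]; exact hp
    have h2 : Ideal.span (G : Set (MvPolynomial (Fin n) ℝ)) ≤
        RingHom.ker (MvPolynomial.aeval b : MvPolynomial (Fin n) ℝ →ₐ[ℝ] ℝ) := by
      rw [Ideal.span_le]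
      intro g hg
      have h3 : π g = 0 := by
        have : g ∈ RingHom.ker π := by rw [← hG]; exact Ideal.subset_span hg
        exact this
      have h4 := hb g (Finset.mem_union_left _ hg)
      rw [h3, map_zero, sign_zero, sign_eq_zero_iff] at h4
      exact h4
    exact h2 h1
  have hsub : ∀ p q, π p = π q → MvPolynomial.aeval b p = (MvPolynomial.aeval b q : ℝ) := by
    intro p q hpq
    have := hker (p - q) (by rw [map_sub, hpq, sub_self])
    rw [map_sub] at this
    linarith
  let χ : A →ₐ[ℝ] ℝ :=
    { toFun := fun a => MvPolynomial.aeval b (lift a)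
      map_one' := by rw [hsub (lift 1) 1 (by rw [hlift, map_one]), map_one]
      map_zero' := by rw [hsub (lift 0) 0 (by rw [hlift, map_zero]), map_zero]
      map_mul' := fun x y => by
        rw [hsub (lift (x * y)) (lift x * lift y) (by rw [hlift, map_mul, hlift, hlift]), map_mul]
      map_add' := fun x y => by
        rw [hsub (lift (x + y)) (lift x + lift y) (by rw [hlift, map_add, hlift, hlift]), map_add]
      commutes' := fun r => by
        rw [hsub (lift (algebraMap ℝ A r)) (algebraMap ℝ _ r) (by rw [hlift, AlgHom.commutes]),
          AlgHom.commutes] }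
  refine ⟨χ, fun s hs => ?_⟩
  have h1 := hb (lift s) (Finset.mem_union_right _
    (Finset.mem_image_of_mem _ (hS.mem_toFinset.2 hs)))
  rw [hlift] at h1
  have h2 := hpos s (.gen hs)
  change 0 ≤ (MvPolynomial.aeval b (lift s) : ℝ)
  rw [← sign_nonneg_iff] at h2 ⊢
  rw [h1]; exact h2

end Part5

section Part6
set_option linter.unusedSectionVars false
open Polynomial

theorem poly_nonneg_of_countable (p : ℝ[X]) {s : Set ℝ} (hs : s.Countable)
    (h : ∀ x, x ∉ s → 0 ≤ p.eval x) : ∀ x, 0 ≤ p.eval x := by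
  have hd : Dense sᶜ := hs.dense_compl ℝ
  have hc : IsClosed {x | 0 ≤ p.eval x} := isClosed_le continuous_const p.continuous
  intro x
  have : closure sᶜ ⊆ {x | 0 ≤ p.eval x} := hc.closure_subset_iff.2 (fun x hx => h x hx)
  exact this (hd x)

theorem poly_sos : ∀ (n : ℕ) (p : ℝ[X]), p.natDegree = n → (∀ x, 0 ≤ p.eval x) →
    IsInPreordering (∅ : Set ℝ[X]) p := by
  have hconst : ∀ c : ℝ, 0 ≤ c → IsInPreordering (∅ : Set ℝ[X]) (C c) := by
    intro c hc
    have := IsInPreordering.sq (S := (∅ : Set ℝ[X])) (C (Real.sqrt c))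
    rwa [← C_pow, Real.sq_sqrt hc] at this
  intro n
  induction n using Nat.strong_induction_on with
  | _ n ih =>
    intro p hpn hp
    rcases Nat.eq_zero_or_pos n with h0 | h0
    · obtain ⟨c, rfl⟩ := natDegree_eq_zero.1 (hpn.trans h0)
      exact hconst c (by simpa using hp 0)
    obtain ⟨r, hr⟩ := p.exists_forall_norm_le
    have hr' : ∀ y, p.eval r ≤ p.eval y := by
      intro y
      have := hr y
      rwa [Real.norm_of_nonneg (hp r), Real.norm_of_nonneg (hp y)] at this
    have h1 : (p - C (p.eval r)).IsRoot r := by simp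
    obtain ⟨q, hq⟩ := dvd_iff_isRoot.2 h1
    have hder : (derivative p).eval r = 0 := by
      have hmin : IsLocalMin (fun x => p.eval x) r := Filter.Eventually.of_forall hr'
      have := hmin.deriv_eq_zero
      rwa [Polynomial.deriv] at this
    have h2 : q.IsRoot r := by
      have := congrArg (fun g => (derivative g).eval r) hq
      simp [hder] at this
      exact this.symm
    obtain ⟨w, hw⟩ := dvd_iff_isRoot.2 h2
    have hp' : p = C (p.eval r) + (X - C r) ^ 2 * w := by
      rw [hw] at hq
      linear_combination hq
    have hwpos : ∀ x, 0 ≤ w.eval x := by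
      apply poly_nonneg_of_countable w (Set.countable_singleton r)
      intro x hx
      have hxr : x - r ≠ 0 := sub_ne_zero.2 hx
      have h3 := hr' x
      have h4 : p.eval x = p.eval r + (x - r) ^ 2 * w.eval x := by
        conv_lhs => rw [hp']
        simp
      have h5 : 0 ≤ (x - r) ^ 2 * w.eval x := by linarith
      exact nonneg_of_mul_nonneg_right h5 (by positivity)
    have hp0 : p - C (p.eval r) ≠ 0 := by
      intro h
      have : p.natDegree = 0 := by rw [sub_eq_zero.1 h]; simp
      omega
    have hw0 : w ≠ 0 := by rintro rfl; rw [hw] at hq; simp at hq; exact hp0 hq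
    have hwd : w.natDegree < n := by
      have := congrArg natDegree hq
      rw [hw, natDegree_sub_C, natDegree_mul (X_sub_C_ne_zero _) (mul_ne_zero (X_sub_C_ne_zero _) hw0),
        natDegree_mul (X_sub_C_ne_zero _) hw0, natDegree_X_sub_C] at this
      omega
    rw [hp']
    exact .add (hconst _ (hp r)) (.mul (.sq _) (ih _ hwd w rfl hwpos))

theorem IsInPreordering.map {A B : Type*} [CommRing A] [CommRing B] (φ : A →+* B) {S : Set A}
    {S' : Set B} (hS : ∀ s ∈ S, φ s ∈ S') {a : A} (h : IsInPreordering S a) :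
    IsInPreordering S' (φ a) := by
  induction h with
  | sq a => rw [map_pow]; exact .sq _
  | gen h => exact .gen (hS _ h)
  | add _ _ h1 h2 => rw [map_add]; exact .add h1 h2
  | mul _ _ h1 h2 => rw [map_mul]; exact .mul h1 h2

theorem IsPre.contains {A : Type*} [CommRing A] {P S : Set A} (hP : IsPre P) (hS : S ⊆ P) {a : A}
    (h : IsInPreordering S a) : a ∈ P := by
  induction h with
  | sq a => exact hP.sq a
  | gen h => exact hS h
  | add _ _ h1 h2 => exact hP.add h1 h2
  | mul _ _ h1 h2 => exact hP.mul h1 h2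

theorem logconvex_bound (m : ℕ → ℝ) (h0 : ∀ n, 0 ≤ m n) (hc : ∀ n, m (n + 1) ^ 2 ≤ m n * m (n + 2))
    (B c : ℝ) (hcpos : 0 < c) (hB : ∀ n, m n ≤ B * c ^ n) : m 1 ≤ c * m 0 := by
  by_contra hcon
  push Not at hcon
  have hm0 : 0 < m 0 := by
    rcases (h0 0).eq_or_lt with h | h
    · exfalso
      have := hc 0
      rw [← h] at this hcon
      simp only [zero_add, zero_mul, mul_zero] at this hcon
      have : m 1 = 0 := by nlinarith [sq_nonneg (m 1)]
      linarith
    · exact h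
  set ρ := m 1 / m 0 with hρ
  have hρc : c < ρ := by rw [hρ, lt_div_iff₀ hm0]; exact hcon
  have hρ0 : 0 < ρ := hcpos.trans hρc
  have key : ∀ n, 0 < m n ∧ ρ * m n ≤ m (n + 1) := by
    intro n
    induction n with
    | zero => exact ⟨hm0, by rw [hρ]; field_simp; simp⟩
    | succ n ih =>
      obtain ⟨h1, h2⟩ := ih
      have h3 : 0 < m (n + 1) := (mul_pos hρ0 h1).trans_le h2
      refine ⟨h3, ?_⟩
      have h4 := hc n
      have h5 : ρ * m n * m (n + 1) ≤ m n * m (n + 2) := by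
        calc ρ * m n * m (n + 1) ≤ m (n + 1) * m (n + 1) := by gcongr
          _ = m (n + 1) ^ 2 := by ring
          _ ≤ _ := h4
      have h6 : m n * (ρ * m (n + 1)) ≤ m n * m (n + 2) := by linarith
      exact le_of_mul_le_mul_left h6 h1
  have key2 : ∀ n, ρ ^ n * m 0 ≤ m n := by
    intro n
    induction n with
    | zero => simp
    | succ n ih =>
      calc ρ ^ (n + 1) * m 0 = ρ * (ρ ^ n * m 0) := by ring
        _ ≤ ρ * m n := by gcongr
        _ ≤ _ := (key n).2
  obtain ⟨n, hn⟩ := pow_unbounded_of_one_lt (B / m 0) ((one_lt_div hcpos).2 hρc)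
  have h7 := (key2 n).trans (hB n)
  rw [div_pow, div_lt_div_iff₀ hm0 (by positivity)] at hn
  linarith

section Pos
variable {A : Type*} [CommRing A] [Algebra ℝ A] {T : Set A} {L : A →ₗ[ℝ] ℝ}

theorem quad_ineq {x y z : ℝ} (h : ∀ t : ℝ, 0 ≤ x + t * (2 * y) + t ^ 2 * z) (hz : 0 ≤ z) :
    y ^ 2 ≤ x * z := by
  rcases hz.eq_or_lt with h0 | h0
  · subst h0
    have h1 := h (-(x + 1) * y)
    have h2 := h (-y)
    have h3 := h 0
    by_contra hc
    push Not at hc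
    have hy : 0 < y ^ 2 := by simpa using hc
    have h5 := h (-(x + 1) / (2 * y))
    have hy0 : y ≠ 0 := by rintro rfl; simp at hy
    have : -(x + 1) / (2 * y) * (2 * y) = -(x + 1) := by field_simp
    rw [this] at h5
    linarith
  · have h1 := h (-y / z)
    have h2 : x + -y / z * (2 * y) + (-y / z) ^ 2 * z = x - y ^ 2 / z := by field_simp; ring
    rw [h2] at h1
    have h3 : y ^ 2 / z ≤ x := by linarith
    rwa [div_le_iff₀ h0] at h3

theorem cauchy_schwarz (hT : IsPre T) (hL : ∀ a ∈ T, 0 ≤ L a) (u v a : A) (ha : a ∈ T) :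
    L (u * v * a) ^ 2 ≤ L (u ^ 2 * a) * L (v ^ 2 * a) := by
  apply quad_ineq
  · intro t
    have h1 := hL _ (hT.mul (hT.sq (u + t • v)) ha)
    have h2 : (u + t • v) ^ 2 * a = u ^ 2 * a + t • ((2 : ℝ) • (u * v * a)) + t ^ 2 • (v ^ 2 * a) := by
      simp only [Algebra.smul_def, map_pow, map_ofNat]
      ring
    rw [h2, map_add, map_add, map_smul, map_smul, map_smul] at h1
    simpa using h1
  · exact hL _ (hT.mul (hT.sq v) ha)

theorem eq_zero_of_one (hT : IsPre T) (hL : ∀ a ∈ T, 0 ≤ L a) (h1 : L 1 = 0) (a : A) : L a = 0 := by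
  have := cauchy_schwarz hT hL 1 a 1 hT.one
  simp [h1] at this
  exact this

/-- boundedness from a Positivstellensatz certificate -/
theorem bounded_of_cert (hT : IsPre T) (hL : ∀ a ∈ T, 0 ≤ L a) {h : A} {c : ℝ} (hc : 0 < c) {p q : A} (hp : p ∈ T) (hq : q ∈ T)
    (e : (algebraMap ℝ A c - h ^ 2) * p = 1 + q) {a : A} (ha : a ∈ T) :
    0 ≤ L ((algebraMap ℝ A c - h ^ 2) * a) := by
  have hsm : ∀ x : A, algebraMap ℝ A c * x = c • x := fun x => (Algebra.smul_def c x).symm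
  set m : ℕ → ℝ := fun n => L ((h ^ n) ^ 2 * a) with hm
  set u : ℕ → ℝ := fun n => L ((h ^ n) ^ 2 * (p * a)) with hu
  have hm0 : ∀ n, 0 ≤ m n := fun n => hL _ (hT.mul (hT.sq _) ha)
  have hu0 : ∀ n, 0 ≤ u n := fun n => hL _ (hT.mul (hT.sq _) (hT.mul hp ha))
  have hrel : ∀ n, m n ≤ c * u n - u (n + 1) := by
    intro n
    have h1 : c • ((h ^ n) ^ 2 * (p * a)) - (h ^ (n + 1)) ^ 2 * (p * a) =
        (h ^ n) ^ 2 * a + (h ^ n) ^ 2 * (q * a) := by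
      rw [← hsm]
      linear_combination ((h ^ n) ^ 2 * a) * e
    have h2 := congrArg L h1
    rw [map_sub, map_smul, map_add] at h2
    have h3 := hL _ (hT.mul (hT.sq (h ^ n)) (hT.mul hq ha))
    simp only [hm, hu]
    rw [smul_eq_mul] at h2
    linarith
  have hub : ∀ n, u n ≤ u 0 * c ^ n := by
    intro n
    induction n with
    | zero => simp
    | succ n ih =>
      have := hrel n
      have := hm0 n
      calc u (n + 1) ≤ c * u n := by linarith
        _ ≤ c * (u 0 * c ^ n) := by gcongr
        _ = _ := by ring
  have hfin := logconvex_bound m hm0 (by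
    intro n
    have h1 := cauchy_schwarz hT hL (h ^ n) (h ^ (n + 2)) a ha
    have h2 : h ^ n * h ^ (n + 2) * a = (h ^ (n + 1)) ^ 2 * a := by ring
    rw [h2] at h1
    exact h1) (c * u 0) c hc (by
    intro n
    have h1 := hrel n
    have h2 := hu0 (n + 1)
    have h3 := hub n
    calc m n ≤ c * u n := by linarith
      _ ≤ c * (u 0 * c ^ n) := by gcongr
      _ = _ := by ring)
  rw [sub_mul, hsm, map_sub, map_smul, smul_eq_mul]
  simp only [hm, pow_one, pow_zero, one_pow, one_mul] at hfin
  linarith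

end Pos

end Part6

section Part7
set_option linter.unusedSectionVars false
open Topology

theorem exists_weights {ι : Type*} [Countable ι] (w : ι → ℝ) (hw : ∀ i, 0 ≤ w i) :
    ∃ c : ι → ℝ, (∀ i, 0 < c i) ∧ ∀ F : Finset ι, ∑ i ∈ F, c i * w i ≤ 1 := by
  haveI := Encodable.ofCountable ι
  obtain ⟨ε, ε0, b, hb, hb1⟩ := posSumOfEncodable one_pos ι
  refine ⟨fun i => ε i / (w i + 1), fun i => div_pos (ε0 i) (by linarith [hw i]), fun F => ?_⟩
  calc ∑ i ∈ F, ε i / (w i + 1) * w i ≤ ∑ i ∈ F, ε i := by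
        apply Finset.sum_le_sum
        intro i _
        have h1 : 0 < w i + 1 := by linarith [hw i]
        rw [div_mul_eq_mul_div, div_le_iff₀ h1]
        nlinarith [ε0 i]
    _ ≤ b := sum_le_hasSum _ (fun i _ => (ε0 i).le) hb
    _ ≤ 1 := hb1

section KM
variable {A : Type*} [CommRing A] [Algebra ℝ A]

theorem abs_le_w {T : Set A} (hT : IsPre T) {L : A →ₗ[ℝ] ℝ} (hL : ∀ a ∈ T, 0 ≤ L a) (s : A) :
    |L s| ≤ L (1 + s ^ 2) := by
  have h1 := hL _ (hT.sq (1 + s))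
  have h2 := hL _ (hT.sq (1 - s))
  have h3 := hL _ (hT.add hT.one (hT.sq s))
  have e1 : (1 + s) ^ 2 = (1 + s ^ 2) + (s + s) := by ring
  have e2 : (1 - s) ^ 2 = (1 + s ^ 2) - (s + s) := by ring
  rw [e1, map_add L (1 + s ^ 2), map_add L s] at h1
  rw [e2, map_sub L (1 + s ^ 2), map_add L s] at h2
  rw [abs_le]
  constructor <;> linarith

/-- The compact convex set of normalised positive functionals. -/
def KMSet (T : Set A) {ι : Type*} (c : ι → ℝ) (w : ι → A) : Set (A → ℝ) :=
  {g | (g ∈ Set.range ((↑) : (A →ₗ[ℝ] ℝ) → A → ℝ)) ∧ (∀ a ∈ T, 0 ≤ g a) ∧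
    ∀ F : Finset ι, ∑ i ∈ F, c i * g (w i) ≤ 1}

theorem KMSet_closed (T : Set A) {ι : Type*} (c : ι → ℝ) (w : ι → A) : IsClosed (KMSet T c w) := by
  apply IsClosed.inter
  · exact LinearMap.isClosed_range_coe A ℝ (RingHom.id ℝ)
  apply IsClosed.inter
  · have : {g : A → ℝ | ∀ a ∈ T, 0 ≤ g a} = ⋂ a ∈ T, {g | 0 ≤ g a} := by ext; simp
    rw [show (fun a : A → ℝ => ∀ a_1 ∈ T, 0 ≤ a a_1) = {g : A → ℝ | ∀ a ∈ T, 0 ≤ g a} from rfl, this]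
    exact isClosed_biInter fun a _ => isClosed_le continuous_const (continuous_apply a)
  · have : {g : A → ℝ | ∀ F : Finset ι, ∑ i ∈ F, c i * g (w i) ≤ 1} =
        ⋂ F : Finset ι, {g | ∑ i ∈ F, c i * g (w i) ≤ 1} := by ext; simp
    rw [show (fun g : A → ℝ => ∀ F : Finset ι, ∑ i ∈ F, c i * g (w i) ≤ 1) =
      {g : A → ℝ | ∀ F : Finset ι, ∑ i ∈ F, c i * g (w i) ≤ 1} from rfl, this]
    exact isClosed_iInter fun F => isClosed_le (by fun_prop) continuous_const

theorem KMSet_convex (T : Set A) {ι : Type*} (c : ι → ℝ) (w : ι → A) : Convex ℝ (KMSet T c w) := by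
  rintro g ⟨⟨L1, rfl⟩, h1, h1'⟩ g2 ⟨⟨L2, rfl⟩, h2, h2'⟩ a b ha hb hab
  refine ⟨⟨a • L1 + b • L2, by ext; simp⟩, fun x hx => ?_, fun F => ?_⟩
  · simp only [Pi.add_apply, Pi.smul_apply, smul_eq_mul]
    have := h1 x hx
    have := h2 x hx
    positivity
  · calc ∑ i ∈ F, c i * (a • ⇑L1 + b • ⇑L2) (w i)
        = a * ∑ i ∈ F, c i * L1 (w i) + b * ∑ i ∈ F, c i * L2 (w i) := by
          rw [Finset.mul_sum, Finset.mul_sum, ← Finset.sum_add_distrib]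
          apply Finset.sum_congr rfl
          intros
          simp only [Pi.add_apply, Pi.smul_apply, smul_eq_mul]
          ring
      _ ≤ a * 1 + b * 1 := by gcongr <;> simp_all
      _ = 1 := by linarith

theorem KMSet_compact {T : Set A} (hT : IsPre T) {ι : Type*} (c : ι → ℝ) (hc : ∀ i, 0 < c i)
    (s : ι → A) (hs : Submodule.span ℝ (Set.range s) = ⊤) :
    IsCompact (KMSet T c (fun i => 1 + s i ^ 2)) := by
  have hB : ∀ a : A, ∃ B : ℝ, ∀ g ∈ KMSet T c (fun i => 1 + s i ^ 2), |g a| ≤ B := by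
    intro a
    have ha : a ∈ Submodule.span ℝ (Set.range s) := by rw [hs]; trivial
    induction ha using Submodule.span_induction with
    | mem x hx =>
      obtain ⟨i, rfl⟩ := hx
      refine ⟨1 / c i, ?_⟩
      rintro g ⟨⟨L, rfl⟩, h1, h2⟩
      have h3 := h2 {i}
      rw [Finset.sum_singleton] at h3
      rw [le_div_iff₀ (hc i)]
      have h4 := mul_le_mul_of_nonneg_right (abs_le_w hT h1 (s i)) (hc i).le
      linarith
    | zero => 
      refine ⟨0, ?_⟩
      rintro g ⟨⟨L, rfl⟩, h1, h2⟩
      simp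
    | add x y _ _ hx hy =>
      obtain ⟨B1, h1⟩ := hx
      obtain ⟨B2, h2⟩ := hy
      refine ⟨B1 + B2, fun g hg => ?_⟩
      have e1 := h1 g hg
      have e2 := h2 g hg
      obtain ⟨⟨L, rfl⟩, -, -⟩ := hg
      rw [map_add]
      exact (abs_add_le _ _).trans (add_le_add e1 e2)
    | smul r x _ hx =>
      obtain ⟨B1, h1⟩ := hx
      refine ⟨|r| * B1, fun g hg => ?_⟩
      have e1 := h1 g hg
      obtain ⟨⟨L, rfl⟩, -, -⟩ := hg
      rw [map_smul, smul_eq_mul, abs_mul]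
      gcongr
  choose B hB using hB
  refine (isCompact_univ_pi (fun a => isCompact_Icc (a := -B a) (b := B a))).of_isClosed_subset
    (KMSet_closed _ _ _) ?_
  intro g hg a _
  exact abs_le.1 (hB a g hg)

theorem extreme_split {T : Set A} (hT : IsPre T) {ι : Type*} (c : ι → ℝ) (hc : ∀ i, 0 < c i)
    (s : ι → A) (hs : Submodule.span ℝ (Set.range s) = ⊤) {L L1 L2 : A →ₗ[ℝ] ℝ}
    (hL : ⇑L ∈ Set.extremePoints ℝ (KMSet T c (fun i => 1 + s i ^ 2)))
    (h1 : ∀ a ∈ T, 0 ≤ L1 a) (h2 : ∀ a ∈ T, 0 ≤ L2 a) (h12 : L = L1 + L2) :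
    ∃ r : ℝ, L1 = r • L := by
  set w : ι → A := fun i => 1 + s i ^ 2 with hw
  have hwT : ∀ i, w i ∈ T := fun i => hT.add hT.one (hT.sq _)
  obtain ⟨⟨-, hLT, hLF⟩, hext⟩ := hL
  have hsum : ∀ M : A →ₗ[ℝ] ℝ, (∀ a ∈ T, 0 ≤ M a) → (∀ a ∈ T, M a ≤ L a) →
      Summable (fun i => c i * M (w i)) := by
    intro M hM hML
    refine summable_of_sum_le (c := 1) (fun i => mul_nonneg (hc i).le (hM _ (hwT i))) fun F => ?_
    refine le_trans (Finset.sum_le_sum fun i _ => ?_) (hLF F)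
    exact mul_le_mul_of_nonneg_left (hML _ (hwT i)) (hc i).le
  have hz : ∀ M : A →ₗ[ℝ] ℝ, (∀ a ∈ T, 0 ≤ M a) → Summable (fun i => c i * M (w i)) →
      ∑' i, c i * M (w i) = 0 → M = 0 := by
    intro M hM hMs h0
    have hnn : ∀ i, 0 ≤ c i * M (w i) := fun i => mul_nonneg (hc i).le (hM _ (hwT i))
    have h3 := (hasSum_zero_iff_of_nonneg hnn).1 (h0 ▸ hMs.hasSum)
    apply LinearMap.ext_on_range hs
    intro i
    have h4 := congrFun h3 i
    have h5 : M (w i) = 0 := by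
      rcases mul_eq_zero.1 h4 with h | h
      · exact absurd h (hc i).ne'
      · exact h
    have h6 := abs_le_w hT hM (s i)
    rw [show M (1 + s i ^ 2) = 0 from h5] at h6
    simpa using h6
  have hs1 := hsum L1 h1 (fun a ha => by rw [h12]; simpa using h2 a ha)
  have hs2 := hsum L2 h2 (fun a ha => by rw [h12]; simpa using h1 a ha)
  have hnn1 : ∀ i, 0 ≤ c i * L1 (w i) := fun i => mul_nonneg (hc i).le (h1 _ (hwT i))
  have hnn2 : ∀ i, 0 ≤ c i * L2 (w i) := fun i => mul_nonneg (hc i).le (h2 _ (hwT i))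
  set n1 := ∑' i, c i * L1 (w i) with hn1
  set n2 := ∑' i, c i * L2 (w i) with hn2
  have hle : n1 + n2 ≤ 1 := by
    rw [hn1, hn2, ← hs1.tsum_add hs2]
    refine (hs1.add hs2).tsum_le_of_sum_le fun F => ?_
    refine le_trans (le_of_eq (Finset.sum_congr rfl fun i _ => ?_)) (hLF F)
    rw [h12, LinearMap.add_apply]
    ring
  have p1 : 0 ≤ n1 := tsum_nonneg hnn1
  have p2 : 0 ≤ n2 := tsum_nonneg hnn2
  rcases p1.eq_or_lt with z1 | q1
  · exact ⟨0, by rw [hz L1 h1 hs1 z1.symm]; simp⟩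
  rcases p2.eq_or_lt with z2 | q2
  · exact ⟨1, by rw [h12, hz L2 h2 hs2 z2.symm]; simp⟩
  have q3 : 0 < 1 - n1 := by linarith
  have m1 : ⇑(n1⁻¹ • L1) ∈ KMSet T c w := by
    refine ⟨⟨_, rfl⟩, fun a ha => ?_, fun F => ?_⟩
    · have := h1 a ha
      simp only [LinearMap.smul_apply, smul_eq_mul]
      positivity
    · have h3 : ∑ i ∈ F, c i * L1 (w i) ≤ n1 := hs1.sum_le_tsum F (fun i _ => hnn1 i)
      calc ∑ i ∈ F, c i * (n1⁻¹ • L1) (w i) = n1⁻¹ * ∑ i ∈ F, c i * L1 (w i) := by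
            rw [Finset.mul_sum]
            apply Finset.sum_congr rfl
            intros
            simp only [LinearMap.smul_apply, smul_eq_mul]
            ring
        _ ≤ n1⁻¹ * n1 := by gcongr
        _ = 1 := inv_mul_cancel₀ q1.ne'
  have m2 : ⇑((1 - n1)⁻¹ • L2) ∈ KMSet T c w := by
    refine ⟨⟨_, rfl⟩, fun a ha => ?_, fun F => ?_⟩
    · have := h2 a ha
      simp only [LinearMap.smul_apply, smul_eq_mul]
      positivity
    · have h3 : ∑ i ∈ F, c i * L2 (w i) ≤ n2 := hs2.sum_le_tsum F (fun i _ => hnn2 i)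
      calc ∑ i ∈ F, c i * ((1 - n1)⁻¹ • L2) (w i) = (1 - n1)⁻¹ * ∑ i ∈ F, c i * L2 (w i) := by
            rw [Finset.mul_sum]
            apply Finset.sum_congr rfl
            intros
            simp only [LinearMap.smul_apply, smul_eq_mul]
            ring
        _ ≤ (1 - n1)⁻¹ * (1 - n1) := by gcongr; linarith
        _ = 1 := inv_mul_cancel₀ q3.ne'
  have h3 := hext m1 m2 ⟨n1, 1 - n1, q1, q3, by ring, by
    funext a
    simp only [Pi.add_apply, Pi.smul_apply, LinearMap.smul_apply, smul_eq_mul, h12,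
      LinearMap.add_apply]
    field_simp⟩
  refine ⟨n1, ?_⟩
  ext a
  have h4 := congrFun h3 a
  simp only [LinearMap.smul_apply, smul_eq_mul] at h4 ⊢
  rw [← h4]
  field_simp

/-- Krein–Milman reduction to functionals on which bounded elements act as scalars. -/
theorem km_reduction {T : Set A} (hT : IsPre T) {ι : Type*} [Countable ι]
    (s : ι → A) (hs : Submodule.span ℝ (Set.range s) = ⊤) (p : A)
    (H : ∀ L : A →ₗ[ℝ] ℝ, (∀ a ∈ T, 0 ≤ L a) →
      (∀ u : A, ∀ c : ℝ, (∀ a ∈ T, 0 ≤ L ((algebraMap ℝ A c - u ^ 2) * a)) →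
        ∃ r : ℝ, ∀ a, L (u * a) = r * L a) → 0 ≤ L p)
    (L0 : A →ₗ[ℝ] ℝ) (hL0 : ∀ a ∈ T, 0 ≤ L0 a) : 0 ≤ L0 p := by
  obtain ⟨c, hc, hcF⟩ := exists_weights (fun i => L0 (1 + s i ^ 2))
    (fun i => hL0 _ (hT.add hT.one (hT.sq _)))
  have hmem : ⇑L0 ∈ KMSet T c (fun i => 1 + s i ^ 2) := ⟨⟨_, rfl⟩, hL0, hcF⟩
  have hKM := closure_convexHull_extremePoints (KMSet_compact hT c hc s hs)
    (KMSet_convex T c (fun i => 1 + s i ^ 2))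
  rw [← hKM] at hmem
  have hcl : IsClosed {g : A → ℝ | 0 ≤ g p} := isClosed_le continuous_const (continuous_apply p)
  have hcv : Convex ℝ {g : A → ℝ | 0 ≤ g p} := by
    intro g hg g' hg' a b ha hb _
    simp only [Set.mem_ofPred_eq, Pi.add_apply, Pi.smul_apply, smul_eq_mul] at *
    positivity
  refine closure_minimal (convexHull_min ?_ hcv) hcl hmem
  intro g hg
  obtain ⟨⟨L, rfl⟩, hLT, -⟩ := hg.1
  refine H L hLT ?_
  intro u c' hu
  set b : ℝ := |c'| + 1 with hb
  have hb1 : 1 ≤ b := by rw [hb]; linarith [abs_nonneg c']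
  have hb0 : 0 < b := by linarith
  have hbc : c' ≤ b ^ 2 := by nlinarith [le_abs_self c']
  clear_value b
  have hsm : ∀ (r : ℝ) (x : A), algebraMap ℝ A r * x = r • x := fun r x => (Algebra.smul_def r x).symm
  have hu' : ∀ a ∈ T, 0 ≤ L ((algebraMap ℝ A (b ^ 2) - u ^ 2) * a) := by
    intro a ha
    have h1 := hu a ha
    have h2 := hLT a ha
    rw [sub_mul, hsm, map_sub, map_smul, smul_eq_mul] at h1 ⊢
    nlinarith
  have hpos : ∀ v : A, v ^ 2 = u ^ 2 → ∀ a ∈ T, 0 ≤ L ((algebraMap ℝ A b + v) * a) := by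
    intro v hv a ha
    have h1 := hu' a ha
    have h2 := hLT _ (hT.mul (hT.sq (algebraMap ℝ A b + v)) ha)
    have h3 : (2 * b) • ((algebraMap ℝ A b + v) * a) =
        (algebraMap ℝ A b + v) ^ 2 * a + (algebraMap ℝ A (b ^ 2) - u ^ 2) * a := by
      rw [← hsm, ← hv, map_mul, map_pow, map_ofNat]
      ring
    have h4 := congrArg L h3
    rw [map_smul, map_add, smul_eq_mul] at h4
    refine nonneg_of_mul_nonneg_right (a := 2 * b) ?_ (by positivity)
    rw [h4]
    exact add_nonneg h2 h1
  set L1 : A →ₗ[ℝ] ℝ := (2 * b)⁻¹ • (L ∘ₗ LinearMap.mulLeft ℝ (algebraMap ℝ A b + u)) with hL1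
  set L2 : A →ₗ[ℝ] ℝ := (2 * b)⁻¹ • (L ∘ₗ LinearMap.mulLeft ℝ (algebraMap ℝ A b + -u)) with hL2
  obtain ⟨r, hr⟩ := extreme_split hT c hc s hs hg (L1 := L1) (L2 := L2)
    (fun a ha => by
      have := hpos u rfl a ha
      simp only [hL1, LinearMap.smul_apply, LinearMap.comp_apply, LinearMap.mulLeft_apply, smul_eq_mul]
      positivity)
    (fun a ha => by
      have := hpos (-u) (by ring) a ha
      simp only [hL2, LinearMap.smul_apply, LinearMap.comp_apply, LinearMap.mulLeft_apply, smul_eq_mul]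
      positivity)
    (by
      ext a
      simp only [hL1, hL2, LinearMap.add_apply, LinearMap.smul_apply, LinearMap.comp_apply,
        LinearMap.mulLeft_apply, smul_eq_mul, add_mul, hsm, map_add, map_smul, neg_mul, map_neg]
      field_simp
      ring)
  refine ⟨2 * b * r - b, fun a => ?_⟩
  have h5 := LinearMap.congr_fun hr a
  simp only [hL1, LinearMap.smul_apply, LinearMap.comp_apply,
        LinearMap.mulLeft_apply, smul_eq_mul, add_mul, hsm, map_add, map_smul] at h5
  field_simp at h5
  linarith

end KM

end Part7

section Part8
set_option linter.unusedSectionVars false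
open Polynomial

theorem exists_poly_bound (g : ℝ[X]) (hg : g ≠ 0) :
    ∃ c : ℝ, ∀ t : ℝ, 0 ≤ (C c - X ^ 2 + (X * (X * g)) ^ 2).eval t := by
  have hdeg : 0 < (X * g).degree := by
    rw [degree_mul, degree_X]
    have : 0 ≤ g.degree := zero_le_degree_iff.2 hg
    calc (0 : WithBot ℕ) < 1 := by norm_num
      _ ≤ 1 + g.degree := le_add_of_nonneg_right this
  have h1 := Polynomial.tendsto_norm_atTop (X * g) hdeg (l := Filter.comap norm Filter.atTop)
    (z := fun x : ℝ => x) Filter.tendsto_comap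
  have h2 := h1.eventually_ge_atTop 1
  rw [Filter.eventually_comap] at h2
  obtain ⟨r, hr⟩ := Filter.eventually_atTop.1 h2
  refine ⟨r ^ 2, fun t => ?_⟩
  have e : (C (r ^ 2) - X ^ 2 + (X * (X * g)) ^ 2).eval t =
      r ^ 2 + t ^ 2 * (((X * g).eval t) ^ 2 - 1) := by
    simp
    ring
  rw [e]
  by_cases ht : r ≤ ‖t‖
  · have h3 := hr ‖t‖ ht t rfl
    rw [Real.norm_eq_abs] at h3
    have h4 : 1 ≤ ((X * g).eval t) ^ 2 := by
      rw [← sq_abs]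
      nlinarith
    have : 0 ≤ ((X * g).eval t) ^ 2 - 1 := by linarith
    positivity
  · push Not at ht
    have h3 : t ^ 2 ≤ r ^ 2 := by
      rw [← sq_abs t, ← Real.norm_eq_abs]
      have := norm_nonneg t
      gcongr
    have : 0 ≤ t ^ 2 * ((X * g).eval t) ^ 2 := by positivity
    nlinarith

section Ext
variable {A : Type*} [CommRing A] [Algebra ℝ A]

/-- Bounded elements act as scalars on `L`. -/
def ExtProp (T : Set A) (L : A →ₗ[ℝ] ℝ) : Prop :=
  ∀ u : A, ∀ c : ℝ, (∀ a ∈ T, 0 ≤ L ((algebraMap ℝ A c - u ^ 2) * a)) →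
        ∃ r : ℝ, ∀ a, L (u * a) = r * L a

/-- The largest ideal in the kernel. -/
def kerIdeal (L : A →ₗ[ℝ] ℝ) : Ideal A where
  carrier := {a | ∀ b, L (a * b) = 0}
  add_mem' := by
    intro a b ha hb c
    rw [add_mul, map_add, ha c, hb c, add_zero]
  zero_mem' := by intro b; simp
  smul_mem' := by
    intro c x hx b
    rw [smul_eq_mul, mul_comm c x, mul_assoc]
    exact hx _

theorem mem_kerIdeal {L : A →ₗ[ℝ] ℝ} {a : A} : a ∈ kerIdeal L ↔ ∀ b, L (a * b) = 0 := Iff.rfl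

theorem kerIdeal_zero {L : A →ₗ[ℝ] ℝ} {a : A} (h : a ∈ kerIdeal L) : L a = 0 := by
  simpa using h 1

theorem scalar_iff {L : A →ₗ[ℝ] ℝ} {a : A} {r : ℝ} :
    a - algebraMap ℝ A r ∈ kerIdeal L ↔ ∀ b, L (a * b) = r * L b := by
  rw [mem_kerIdeal]
  refine forall_congr' fun b => ?_
  rw [sub_mul, ← Algebra.smul_def, map_sub, map_smul, smul_eq_mul, sub_eq_zero]

theorem sos_mem {T : Set A} (hT : IsPre T) (P : ℝ[X]) (hP : ∀ t, 0 ≤ P.eval t) (a : A) :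
    aeval a P ∈ T := by
  have h1 := poly_sos _ P rfl hP
  have h2 := h1.map (aeval a : ℝ[X] →ₐ[ℝ] A).toRingHom (S' := ∅) (by simp)
  exact hT.contains (Set.empty_subset _) h2

theorem alg_scalar {T : Set A} (hT : IsPre T) {L : A →ₗ[ℝ] ℝ} (hL : ∀ a ∈ T, 0 ≤ L a)
    (hE : ExtProp T L) (a : A) (g : ℝ[X]) (hg : g ≠ 0) (hga : aeval a g ∈ kerIdeal L) :
    ∃ r : ℝ, a - algebraMap ℝ A r ∈ kerIdeal L := by
  obtain ⟨c, hc⟩ := exists_poly_bound g hg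
  obtain ⟨r, hr⟩ := hE a c (by
    intro b hb
    have h1 := hL _ (hT.mul (sos_mem hT _ hc a) hb)
    have h2 : aeval a (C c - X ^ 2 + (X * (X * g)) ^ 2) * b =
        (algebraMap ℝ A c - a ^ 2) * b + aeval a g * (a ^ 4 * aeval a g * b) := by
      simp
      ring
    rw [h2, map_add, hga _, add_zero] at h1
    exact h1)
  exact ⟨r, scalar_iff.2 hr⟩

/-- If all elements are scalars modulo the kernel ideal then `L` is a multiple of a character. -/
theorem nonneg_of_scalar {L : A →ₗ[ℝ] ℝ} (h1 : 0 ≤ L 1) (p : A) (hp : ∀ χ : A →ₐ[ℝ] ℝ, 0 ≤ χ p)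
    (h : ∀ a, ∃ r : ℝ, a - algebraMap ℝ A r ∈ kerIdeal L) : 0 ≤ L p := by
  choose r hr using h
  have hr' : ∀ a b, L (a * b) = r a * L b := fun a => scalar_iff.1 (hr a)
  have hr1 : ∀ a, L a = r a * L 1 := fun a => by simpa using hr' a 1
  rcases h1.eq_or_lt with h0 | h0
  · rw [hr1, ← h0, mul_zero]
  have := hp (AlgHom.ofLinearMap ((L 1)⁻¹ • L) (by simp [h0.ne']) (by
    intro x y
    simp only [LinearMap.smul_apply, smul_eq_mul]
    rw [hr' x y, hr1 x, hr1 y]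
    field_simp))
  simp only [AlgHom.ofLinearMap_apply, LinearMap.smul_apply, smul_eq_mul] at this
  exact nonneg_of_mul_nonneg_right this (by positivity)

/-- Evaluation on a localization of a one variable polynomial ring. -/
noncomputable def evalE (ℰ : Submonoid ℝ[X]) (s : ℝ) (hs : ∀ w ∈ ℰ, w.eval s ≠ 0) :
    Localization ℰ →ₐ[ℝ] ℝ :=
  IsLocalization.liftAlgHom (M := ℰ) (S := Localization ℰ) (f := (aeval s : ℝ[X] →ₐ[ℝ] ℝ))
    (fun y => isUnit_iff_ne_zero.2 (by simpa [aeval_def] using hs y y.2))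

theorem evalE_algebraMap (ℰ : Submonoid ℝ[X]) (s : ℝ) (hs : ∀ w ∈ ℰ, w.eval s ≠ 0) (n : ℝ[X]) :
    evalE ℰ s hs (algebraMap _ _ n) = n.eval s := by
  simp [evalE, IsLocalization.lift_eq]

theorem bad_countable (ℰ : Submonoid ℝ[X]) (h0 : (0 : ℝ[X]) ∉ ℰ) (hfg : ℰ.FG) :
    ∃ Z : Set ℝ, Z.Countable ∧ ∀ s ∉ Z, ∀ w ∈ ℰ, w.eval s ≠ 0 := by
  obtain ⟨F, hF⟩ := hfg
  refine ⟨⋃ g ∈ F, {s | g.eval s = 0}, ?_, ?_⟩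
  · refine Set.Countable.biUnion F.countable_toSet fun g hg => ?_
    have hg0 : g ≠ 0 := by
      rintro rfl
      exact h0 (hF ▸ Submonoid.subset_closure hg)
    exact ((g.rootSet_finite ℝ).subset (fun s hs => by
      rw [mem_rootSet]
      exact ⟨hg0, by simpa [aeval_def] using hs⟩)).countable
  · intro s hs w hw
    rw [← hF] at hw
    induction hw using Submonoid.closure_induction with
    | mem x hx =>
      intro h
      exact hs (Set.mem_biUnion hx h)
    | one => simp
    | mul x y _ _ hx hy => rw [eval_mul]; exact mul_ne_zero hx hy

theorem fiber_nonneg {T : Set A} (hT : IsPre T) {L : A →ₗ[ℝ] ℝ} (hL : ∀ a ∈ T, 0 ≤ L a)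
    (hE : ExtProp T L) (p : A) (hp : ∀ χ : A →ₐ[ℝ] ℝ, 0 ≤ χ p)
    (ℰ : Submonoid ℝ[X]) (h0 : (0 : ℝ[X]) ∉ ℰ) (hfg : ℰ.FG)
    (σ : Localization ℰ →ₐ[ℝ] A ⧸ kerIdeal L) (hσ : Function.Surjective σ) : 0 ≤ L p := by
  have haev : ∀ (a : A) (n : ℝ[X]), Ideal.Quotient.mk (kerIdeal L) a = σ (algebraMap ℝ[X] (Localization ℰ) X) →
      Ideal.Quotient.mk (kerIdeal L) (aeval a n) = σ (algebraMap ℝ[X] (Localization ℰ) n) := by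
    intro a n ha
    have h1 : Ideal.Quotient.mk (kerIdeal L) (aeval a n) =
        aeval (Ideal.Quotient.mkₐ ℝ (kerIdeal L) a) n := (aeval_algHom_apply (Ideal.Quotient.mkₐ ℝ (kerIdeal L)) a n).symm
    rw [h1]
    have h2 : Ideal.Quotient.mkₐ ℝ (kerIdeal L) a = σ (algebraMap ℝ[X] (Localization ℰ) X) := ha
    rw [h2, aeval_algHom_apply, aeval_algebraMap_apply, aeval_X_left_apply]
  obtain ⟨y, hy⟩ := Ideal.Quotient.mk_surjective (I := kerIdeal L) (σ (algebraMap ℝ[X] (Localization ℰ) X))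
  have hmk : ∀ e : Localization ℰ, ∃ n : ℝ[X], ∃ w ∈ ℰ, e * algebraMap ℝ[X] (Localization ℰ) w = algebraMap ℝ[X] (Localization ℰ) n := by
    intro e
    obtain ⟨⟨n, w⟩, h⟩ := IsLocalization.surj ℰ e
    exact ⟨n, w, w.2, h⟩
  by_cases hinj : Function.Injective σ
  · -- the transcendental case
    set τ := AlgEquiv.ofBijective σ ⟨hinj, hσ⟩ with hτ
    obtain ⟨e, he⟩ := hσ (Ideal.Quotient.mk _ p)
    obtain ⟨n, w, hw, hnw⟩ := hmk e
    obtain ⟨Z, hZ, hZ'⟩ := bad_countable ℰ h0 hfg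
    have hpos : ∀ s, 0 ≤ (n * w).eval s := by
      refine poly_nonneg_of_countable _ hZ fun s hs => ?_
      have h1 := hp (((evalE ℰ s (hZ' s hs)).comp (τ.symm : _ →ₐ[ℝ] _)).comp
        (Ideal.Quotient.mkₐ ℝ (kerIdeal L)))
      have h2 : τ.symm (Ideal.Quotient.mk (kerIdeal L) p) = e := by
        rw [← he, AlgEquiv.symm_apply_eq]
        rfl
      have h3 : 0 ≤ evalE ℰ s (hZ' s hs) e := by
        rw [← h2]
        exact h1
      have h4 := congrArg (evalE ℰ s (hZ' s hs)) hnw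
      rw [map_mul, evalE_algebraMap, evalE_algebraMap] at h4
      rw [eval_mul, ← h4, mul_assoc]
      exact mul_nonneg h3 (mul_self_nonneg _)
    have hu : IsUnit (algebraMap ℝ[X] (Localization ℰ) w) := IsLocalization.map_units _ (⟨w, hw⟩ : ℰ)
    obtain ⟨v, hv⟩ := hu.exists_right_inv
    obtain ⟨b, hb⟩ := Ideal.Quotient.mk_surjective (I := kerIdeal L) (σ v)
    have h5 : p - aeval y (n * w) * b ^ 2 ∈ kerIdeal L := by
      rw [← Ideal.Quotient.eq, map_mul, map_pow, haev y _ hy, hb, ← he, ← map_pow, ← map_mul]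
      congr 1
      rw [map_mul, ← hnw]
      linear_combination (-e * (1 + algebraMap ℝ[X] (Localization ℰ) w * v)) * hv
    have h6 := kerIdeal_zero h5
    rw [map_sub, sub_eq_zero] at h6
    rw [h6]
    exact hL _ (hT.mul (sos_mem hT _ hpos y) (hT.sq b))
  · -- the algebraic case
    obtain ⟨e, he0, he⟩ : ∃ e, e ≠ 0 ∧ σ e = 0 := by
      by_contra hcon
      push Not at hcon
      exact hinj ((injective_iff_map_eq_zero σ).2 fun a ha => by
        by_contra h
        exact hcon a h ha)
    obtain ⟨n, w, hw, hnw⟩ := hmk e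
    have hn0 : n ≠ 0 := by
      rintro rfl
      rw [map_zero] at hnw
      have hu : IsUnit (algebraMap ℝ[X] (Localization ℰ) w) :=
        IsLocalization.map_units _ (⟨w, hw⟩ : ℰ)
      exact he0 (hu.mul_left_eq_zero.1 hnw)
    have hny : aeval y n ∈ kerIdeal L := by
      rw [← Ideal.Quotient.eq_zero_iff_mem, haev y n hy, ← hnw, map_mul, he, zero_mul]
    obtain ⟨r, hr⟩ := alg_scalar hT hL hE y n hn0 hny
    have hyr : σ (algebraMap ℝ[X] (Localization ℰ) X) = Ideal.Quotient.mk (kerIdeal L) (algebraMap ℝ A r) := by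
      rw [← hy, Ideal.Quotient.eq]
      exact hr
    have hev : ∀ g : ℝ[X], σ (algebraMap ℝ[X] (Localization ℰ) g) =
        Ideal.Quotient.mk (kerIdeal L) (algebraMap ℝ A (g.eval r)) := by
      intro g
      rw [← haev _ g hyr.symm, aeval_algebraMap_apply]
      simp [aeval_def]
    refine nonneg_of_scalar (hL _ hT.one) p hp fun a => ?_
    obtain ⟨e', he'⟩ := hσ (Ideal.Quotient.mk _ a)
    obtain ⟨n', w', hw', hnw'⟩ := hmk e'
    have hu : IsUnit (algebraMap ℝ[X] (Localization ℰ) w') :=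
      IsLocalization.map_units _ (⟨w', hw'⟩ : ℰ)
    by_cases hwr : w'.eval r = 0
    · have h7 := hu.map σ
      rw [hev, hwr, map_zero, map_zero, isUnit_zero_iff] at h7
      have h8 : (1 : A) ∈ kerIdeal L := by
        rw [← Ideal.Quotient.eq_zero_iff_mem, map_one, h7]
      exact ⟨0, by rw [(Ideal.eq_top_iff_one _).2 h8]; trivial⟩
    · refine ⟨n'.eval r / w'.eval r, ?_⟩
      have h9 := congrArg σ hnw'
      rw [map_mul, he', hev, hev, ← map_mul, Ideal.Quotient.eq] at h9
      have h10 := (kerIdeal L).mul_mem_left (algebraMap ℝ A (w'.eval r)⁻¹) h9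
      convert h10 using 1
      have e1 : algebraMap ℝ A (w'.eval r)⁻¹ * algebraMap ℝ A (w'.eval r) = 1 := by
        rw [← map_mul, inv_mul_cancel₀ hwr, map_one]
      rw [div_eq_mul_inv, map_mul]
      linear_combination (-a) * e1

open TensorProduct in
theorem fiber_surj {T : Set A} (hT : IsPre T) {L : A →ₗ[ℝ] ℝ} (hL : ∀ a ∈ T, 0 ≤ L a)
    (hE : ExtProp T L) {E Cb : Type*} [CommRing E] [Algebra ℝ E] [CommRing Cb] [Algebra ℝ Cb]
    [FiniteDimensional ℝ Cb] (I : Ideal A) (hI : I ≤ kerIdeal L)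
    (ρ : E ⊗[ℝ] Cb →ₐ[ℝ] A ⧸ I) (hρ : Function.Surjective ρ) :
    ∃ σ : E →ₐ[ℝ] A ⧸ kerIdeal L, Function.Surjective σ := by
  set π : (A ⧸ I) →ₐ[ℝ] A ⧸ kerIdeal L := Ideal.Quotient.factorₐ ℝ hI with hπ
  have hπmk : ∀ a, π (Ideal.Quotient.mk I a) = Ideal.Quotient.mk _ a := fun a => rfl
  have hc : ∀ c : Cb, ∃ r : ℝ, π (ρ (1 ⊗ₜ c)) = algebraMap ℝ _ r := by
    intro c
    obtain ⟨g, hg0, hg⟩ := Algebra.IsAlgebraic.isAlgebraic (R := ℝ) c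
    obtain ⟨a, ha⟩ := Ideal.Quotient.mk_surjective (I := I) (ρ (1 ⊗ₜ c))
    have h1 : aeval a g ∈ kerIdeal L := by
      apply hI
      rw [← Ideal.Quotient.eq_zero_iff_mem]
      have h2 : Ideal.Quotient.mk I (aeval a g) =
        aeval (Ideal.Quotient.mkₐ ℝ I a) g := (aeval_algHom_apply (Ideal.Quotient.mkₐ ℝ I) a g).symm
      have h3 : Ideal.Quotient.mkₐ ℝ I a = (ρ.comp Algebra.TensorProduct.includeRight) c := ha
      rw [h2, h3, aeval_algHom_apply, hg, map_zero]
    obtain ⟨r, hr⟩ := alg_scalar hT hL hE a g hg0 h1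
    refine ⟨r, ?_⟩
    rw [← ha, hπmk]
    exact Ideal.Quotient.eq.2 hr
  set σ : E →ₐ[ℝ] A ⧸ kerIdeal L := (π.comp ρ).comp Algebra.TensorProduct.includeLeft with hσ
  refine ⟨σ, fun z => ?_⟩
  obtain ⟨a, rfl⟩ := Ideal.Quotient.mk_surjective z
  obtain ⟨x, hx⟩ := hρ (Ideal.Quotient.mk I a)
  rw [← hπmk, ← hx]
  clear hx
  induction x using TensorProduct.induction_on with
  | zero => exact ⟨0, by simp⟩
  | tmul e c =>
    obtain ⟨r, hr⟩ := hc c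
    refine ⟨r • e, ?_⟩
    have h1 : e ⊗ₜ[ℝ] c = (e ⊗ₜ[ℝ] 1) * ((1 : E) ⊗ₜ[ℝ] c) := by simp
    rw [h1, map_mul, map_mul, hr, map_smul, Algebra.smul_def, mul_comm]
    rfl
  | add x y hx hy =>
    obtain ⟨a1, h1⟩ := hx
    obtain ⟨a2, h2⟩ := hy
    exact ⟨a1 + a2, by rw [map_add, map_add, map_add, h1, h2]⟩

/-- Positivity of extreme functionals. -/
theorem extreme_nonneg [Algebra.FiniteType ℝ A] (S : Set A) (hS : S.Finite) {m : ℕ} (h : Fin m → A)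
    (hbd : ∃ C : ℝ, ∀ χ : A →ₐ[ℝ] ℝ, (∀ s ∈ S, 0 ≤ χ s) → ∀ j, |χ (h j)| ≤ C)
    (hfib : ∀ lam : Fin m → ℝ, (∃ χ : A →ₐ[ℝ] ℝ, (∀ s ∈ S, 0 ≤ χ s) ∧ ∀ j, χ (h j) = lam j) →
      ∃ (ℰ : Submonoid (Polynomial ℝ)), (0 : Polynomial ℝ) ∉ ℰ ∧ ℰ.FG ∧
        ∃ (Cb : FinCommAlg)
          (ρ : TensorProduct ℝ (Localization ℰ) Cb.carrier →ₐ[ℝ]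
            (A ⧸ Ideal.span (Set.range fun j : Fin m => h j - algebraMap ℝ A (lam j)))),
          Function.Surjective ρ)
    (p : A) (hp : ∀ χ : A →ₐ[ℝ] ℝ, 0 ≤ χ p) (L : A →ₗ[ℝ] ℝ)
    (hL : ∀ a ∈ {a | IsInPreordering S a}, 0 ≤ L a)
    (hE : ExtProp {a | IsInPreordering S a} L) : 0 ≤ L p := by
  have hT := isPre_gen S
  have cert : ∀ b : A, (¬ ∃ χ : A →ₐ[ℝ] ℝ, (∀ s ∈ S, 0 ≤ χ s) ∧ 0 ≤ χ b) →
      ∃ p ∈ {a | IsInPreordering S a}, ∃ q ∈ {a | IsInPreordering S a}, (-1 : A) = p + b * q := by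
    intro b hb
    have h1 := pss (insert b S) (hS.insert b) (by
      rintro ⟨χ, hχ⟩
      exact hb ⟨χ, fun s hs => hχ s (Or.inr hs), hχ b (Or.inl rfl)⟩)
    refine (hT.adjoin b).contains ?_ h1
    rintro s (rfl | hs)
    · exact ⟨0, hT.zero, 1, hT.one, by ring⟩
    · exact ⟨s, .gen hs, 0, hT.zero, by ring⟩
  obtain ⟨C, hC⟩ := hbd
  have hsc : ∀ j, ∃ r : ℝ, ∀ a, L (h j * a) = r * L a := by
    intro j
    have hpos : 0 < C ^ 2 + 1 := by positivity
    obtain ⟨p', hp', q', hq', e⟩ := cert (h j ^ 2 - algebraMap ℝ A (C ^ 2 + 1)) (by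
      rintro ⟨χ, h1, h2⟩
      have h3 := hC χ h1 j
      rw [map_sub, map_pow, AlgHom.commutes] at h2
      have h4 : χ (h j) ^ 2 ≤ C ^ 2 := by
        rw [← sq_abs]
        gcongr
      have h5 : (algebraMap ℝ ℝ) (C ^ 2 + 1) = C ^ 2 + 1 := rfl
      linarith)
    refine hE (h j) (C ^ 2 + 1) fun a ha => ?_
    refine bounded_of_cert hT hL hpos hq' hp' ?_ ha
    linear_combination e
  choose lam hlam using hsc
  by_cases hex : ∃ χ : A →ₐ[ℝ] ℝ, (∀ s ∈ S, 0 ≤ χ s) ∧ ∀ j, χ (h j) = lam j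
  · obtain ⟨ℰ, h0, hfg, Cb, ρ, hρ⟩ := hfib lam hex
    haveI := Cb.findim
    obtain ⟨σ, hσ⟩ := fiber_surj hT hL hE _ (by
      rw [Ideal.span_le]
      rintro _ ⟨j, rfl⟩
      exact scalar_iff.2 (hlam j)) ρ hρ
    exact fiber_nonneg hT hL hE p hp ℰ h0 hfg σ hσ
  · obtain ⟨p', hp', q', hq', e⟩ := cert (-∑ j, (h j - algebraMap ℝ A (lam j)) ^ 2) (by
      rintro ⟨χ, h1, h2⟩
      refine hex ⟨χ, h1, fun j => ?_⟩
      rw [map_neg, map_sum] at h2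
      have h3 : ∑ j, χ ((h j - algebraMap ℝ A (lam j)) ^ 2) = 0 :=
        le_antisymm (by linarith) (Finset.sum_nonneg fun j _ => by rw [map_pow]; positivity)
      rw [Finset.sum_eq_zero_iff_of_nonneg (fun j _ => by rw [map_pow]; positivity)] at h3
      have h4 := h3 j (Finset.mem_univ j)
      rw [map_pow, map_sub, AlgHom.commutes] at h4
      have h5 := pow_eq_zero_iff (two_ne_zero) |>.1 h4
      exact sub_eq_zero.1 h5)
    have h6 : L ((∑ j, (h j - algebraMap ℝ A (lam j)) ^ 2) * q') = 0 := by
      have : ∑ j, (h j - algebraMap ℝ A (lam j)) ^ 2 ∈ kerIdeal L :=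
        Ideal.sum_mem _ fun j _ => by
          rw [pow_two]
          exact Ideal.mul_mem_left _ _ (scalar_iff.2 (hlam j))
      exact this q'
    have h7 : L 1 + L p' = L ((∑ j, (h j - algebraMap ℝ A (lam j)) ^ 2) * q') := by
      rw [← map_add]
      congr 1
      linear_combination -e
    have h8 := hL _ hp'
    have h9 := hL _ hT.one
    exact (eq_zero_of_one hT hL (by linarith) p).ge

theorem nonneg_of_chars [Algebra.FiniteType ℝ A] (S : Set A) (hS : S.Finite) {m : ℕ} (h : Fin m → A)
    (hbd : ∃ C : ℝ, ∀ χ : A →ₐ[ℝ] ℝ, (∀ s ∈ S, 0 ≤ χ s) → ∀ j, |χ (h j)| ≤ C)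
    (hfib : ∀ lam : Fin m → ℝ, (∃ χ : A →ₐ[ℝ] ℝ, (∀ s ∈ S, 0 ≤ χ s) ∧ ∀ j, χ (h j) = lam j) →
      ∃ (ℰ : Submonoid (Polynomial ℝ)), (0 : Polynomial ℝ) ∉ ℰ ∧ ℰ.FG ∧
        ∃ (Cb : FinCommAlg)
          (ρ : TensorProduct ℝ (Localization ℰ) Cb.carrier →ₐ[ℝ]
            (A ⧸ Ideal.span (Set.range fun j : Fin m => h j - algebraMap ℝ A (lam j)))),
          Function.Surjective ρ)
    (p : A) (hp : ∀ χ : A →ₐ[ℝ] ℝ, 0 ≤ χ p) (L : A →ₗ[ℝ] ℝ)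
    (hL : ∀ a, IsInPreordering S a → 0 ≤ L a) : 0 ≤ L p := by
  obtain ⟨n, φ, hφ⟩ := Algebra.FiniteType.iff_quotient_mvPolynomial''.1
    (inferInstance : Algebra.FiniteType ℝ A)
  refine km_reduction (isPre_gen S) (fun i : Fin n →₀ ℕ => φ (MvPolynomial.monomial i 1)) ?_ p
    (fun L' hL' hE' => extreme_nonneg S hS h hbd hfib p hp L' hL' hE') L hL
  rw [Set.range_comp' φ, ← AlgHom.coe_toLinearMap, Submodule.span_image]
  have h1 : Submodule.span ℝ (Set.range fun i : Fin n →₀ ℕ => MvPolynomial.monomial i (1 : ℝ)) = ⊤ := by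
    have := (MvPolynomial.basisMonomials (Fin n) ℝ).span_eq
    simpa using this
  rw [h1, Submodule.map_top, LinearMap.range_eq_top]
  exact hφ

end Ext

end Part8

section Part9
set_option linter.unusedSectionVars false
open MeasureTheory CompactlySupported Topology Filter

section Haviland
variable {X : Type*} [TopologicalSpace X] [T2Space X] [MeasurableSpace X] [BorelSpace X]
  [LocallyCompactSpace X] {A : Type*} [CommRing A] [Algebra ℝ A]

/-- The extension cone. -/
def havCone (ev : A →ₐ[ℝ] (X → ℝ)) : PointedCone ℝ (A × C_c(X, ℝ)) where
  carrier := {z | ∀ x, 0 ≤ ev z.1 x + z.2 x}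
  add_mem' := by
    intro a b ha hb x
    have h1 := ha x
    have h2 := hb x
    simp only [Prod.fst_add, Prod.snd_add, map_add, Pi.add_apply,
      CompactlySupportedContinuousMap.coe_add]
    linarith
  zero_mem' := by intro x; simp
  smul_mem' := by
    intro c z hz x
    have h1 := hz x
    have h2 : ev (c • z).1 x + (c • z).2 x = (c : ℝ) * (ev z.1 x + z.2 x) := by
      have h3 : (c • z).1 = (c : ℝ) • z.1 := rfl
      have h4 : (c • z).2 = (c : ℝ) • z.2 := rfl
      rw [h3, h4, map_smul, mul_add]
      rfl
    rw [h2]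
    exact mul_nonneg c.2 h1

theorem mem_havCone {ev : A →ₐ[ℝ] (X → ℝ)} {z : A × C_c(X, ℝ)} :
    z ∈ havCone ev ↔ ∀ x, 0 ≤ ev z.1 x + z.2 x := Iff.rfl

theorem hav_ext (ev : A →ₐ[ℝ] (X → ℝ)) (L0 : A →ₗ[ℝ] ℝ) (hL0 : ∀ a, (∀ x, 0 ≤ ev a x) → 0 ≤ L0 a) :
    ∃ g : (A × C_c(X, ℝ)) →ₗ[ℝ] ℝ, (∀ a, g (a, 0) = L0 a) ∧
      ∀ a φ, (∀ x, 0 ≤ ev a x + φ x) → 0 ≤ g (a, φ) := by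
  obtain ⟨g, hg1, hg2⟩ := riesz_extension (havCone ev)
    ⟨LinearMap.range (LinearMap.inl ℝ A C_c(X, ℝ)),
      (L0 ∘ₗ LinearMap.fst ℝ A C_c(X, ℝ)) ∘ₗ Submodule.subtype _⟩
    (by
      rintro ⟨x, a, rfl⟩ hx
      refine hL0 a fun t => ?_
      have := hx t
      simpa using this)
    (by
      rintro ⟨a, φ⟩
      obtain ⟨B, hB⟩ := φ.continuous.bounded_above_of_compact_support φ.hasCompactSupport
      refine ⟨⟨_, algebraMap ℝ A B - a, rfl⟩, fun t => ?_⟩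
      have h1 : ‖φ t‖ ≤ B := hB t
      rw [Real.norm_eq_abs] at h1
      have h2 := neg_abs_le (φ t)
      simp
      linarith)
  refine ⟨g, fun a => hg1 ⟨_, a, rfl⟩, fun a φ h => hg2 _ h⟩

/-- cut-off -/
noncomputable def cut (θ : X → ℝ) (k : ℕ) (x : X) : ℝ := max 0 (min 1 ((k : ℝ) + 1 - θ x))

theorem cut_nonneg (θ : X → ℝ) (k : ℕ) (x : X) : 0 ≤ cut θ k x := le_max_left _ _
theorem cut_le_one (θ : X → ℝ) (k : ℕ) (x : X) : cut θ k x ≤ 1 :=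
  max_le zero_le_one (min_le_left _ _)
theorem cut_eq_one (θ : X → ℝ) (k : ℕ) (x : X) (h : θ x ≤ k) : cut θ k x = 1 := by
  unfold cut
  rw [min_eq_left (by linarith), max_eq_right zero_le_one]
theorem cut_eq_zero (θ : X → ℝ) (k : ℕ) (x : X) (h : (k : ℝ) + 1 ≤ θ x) : cut θ k x = 0 := by
  unfold cut
  rw [max_eq_left]
  exact (min_le_right _ _).trans (by linarith)

theorem haviland (ev : A →ₐ[ℝ] (X → ℝ)) (hev : ∀ a, Continuous (ev a)) (L0 : A →ₗ[ℝ] ℝ)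
    (hL0 : ∀ a, (∀ x, 0 ≤ ev a x) → 0 ≤ L0 a) (θ : A) (hθ0 : ∀ x, 0 ≤ ev θ x)
    (hθ : ∀ r : ℝ, IsCompact {x | ev θ x ≤ r}) :
    ∃ μ : Measure X, ∀ a, Integrable (ev a) μ ∧ L0 a = ∫ x, ev a x ∂μ := by
  obtain ⟨g, hg1, hg2⟩ := hav_ext ev L0 hL0
  set Λ : C_c(X, ℝ) →ₚ[ℝ] ℝ := PositiveLinearMap.mk₀ (g ∘ₗ LinearMap.inr ℝ A C_c(X, ℝ)) (by
    intro φ hφ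
    refine hg2 0 φ fun x => ?_
    rw [map_zero, Pi.zero_apply, zero_add]
    exact CompactlySupportedContinuousMap.le_def.1 hφ x) with hΛ
  have hΛg : ∀ φ, Λ φ = g (0, φ) := fun φ => rfl
  set μ := RealRMK.rieszMeasure Λ with hμ
  have hintg : ∀ φ : C_c(X, ℝ), ∫ x, φ x ∂μ = g (0, φ) := fun φ => by
    rw [hμ, RealRMK.integral_rieszMeasure, hΛg]
  have hsplit : ∀ a φ, g (a, φ) = L0 a + g (0, φ) := by
    intro a φ
    rw [← hg1, ← map_add]
    simp
  have main : ∀ a, (∀ x, 0 ≤ ev a x) → Integrable (ev a) μ ∧ L0 a = ∫ x, ev a x ∂μ := by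
    intro a ha
    let ψ : ℕ → C_c(X, ℝ) := fun k => ⟨⟨fun x => cut (ev θ) k x * ev a x, by
        have h1 := hev a
        have h2 := hev θ
        unfold cut
        fun_prop⟩, by
      refine HasCompactSupport.intro (hθ (k + 1)) fun x hx => ?_
      have hx' : (k : ℝ) + 1 ≤ ev θ x := by
        by_contra hcon
        push Not at hcon
        exact hx hcon.le
      simp [cut_eq_zero _ _ _ hx']⟩
    have hψ : ∀ k x, ψ k x = cut (ev θ) k x * ev a x := fun k x => rfl
    have hψ0 : ∀ k x, 0 ≤ ψ k x := fun k x => mul_nonneg (cut_nonneg _ _ _) (ha x)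
    have hψ1 : ∀ k x, ψ k x ≤ ev a x := fun k x => by
      rw [hψ]
      exact mul_le_of_le_one_left (ha x) (cut_le_one _ _ _)
    have hψint : ∀ k, Integrable (fun x => ψ k x) μ := fun k =>
      (ψ k).continuous.integrable_of_hasCompactSupport (ψ k).hasCompactSupport
    have hup : ∀ k, ∫ x, ψ k x ∂μ ≤ L0 a := by
      intro k
      rw [hintg]
      have h1 := hg2 a (-ψ k) (fun x => by
        have := hψ1 k x
        simp only [CompactlySupportedContinuousMap.coe_neg, Pi.neg_apply]
        linarith)
      have h2 : g (0, -ψ k) = - g (0, ψ k) := by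
        rw [← map_neg]
        simp
      rw [hsplit, h2] at h1
      linarith
    have hlow : ∀ k : ℕ, 0 < k → L0 a - L0 (a * θ) / k ≤ ∫ x, ψ k x ∂μ := by
      intro k hk
      have hk' : (0 : ℝ) < k := by exact_mod_cast hk
      rw [hintg]
      have h1 := hg2 ((k : ℝ)⁻¹ • (a * θ) - a) (ψ k) (fun x => by
        have e : ev ((k : ℝ)⁻¹ • (a * θ) - a) x = (k : ℝ)⁻¹ * (ev a x * ev θ x) - ev a x := by
          rw [map_sub, map_smul, map_mul]
          rfl
        rw [e, hψ]
        by_cases hx : ev θ x ≤ k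
        · rw [cut_eq_one _ _ _ hx]
          have := ha x
          have := hθ0 x
          have : 0 ≤ (k : ℝ)⁻¹ * (ev a x * ev θ x) := by positivity
          linarith
        · push Not at hx
          have h3 : 1 ≤ (k : ℝ)⁻¹ * ev θ x := by
            rw [← div_eq_inv_mul, le_div_iff₀ hk']
            linarith
          have h4 := mul_le_mul_of_nonneg_left h3 (ha x)
          have h5 := hψ0 k x
          rw [hψ] at h5
          nlinarith)
      rw [hsplit, map_sub, map_smul, smul_eq_mul] at h1
      rw [div_eq_inv_mul]
      linarith
    have hev1 : ∀ x, ∀ᶠ k in atTop, ψ k x = ev a x := by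
      intro x
      filter_upwards [eventually_ge_atTop ⌈ev θ x⌉₊] with k hk
      rw [hψ, cut_eq_one _ _ _ (Nat.ceil_le.1 hk), one_mul]
    have hlim : ∀ x, Tendsto (fun k => ψ k x) atTop (𝓝 (ev a x)) := fun x =>
      tendsto_const_nhds.congr' ((hev1 x).mono fun k hk => hk.symm)
    have hmeas : AEStronglyMeasurable (ev a) μ :=
      aestronglyMeasurable_of_tendsto_ae atTop (fun k => (hψint k).aestronglyMeasurable)
        (Eventually.of_forall hlim)
    have hfin : ∫⁻ x, ENNReal.ofReal (ev a x) ∂μ ≤ ENNReal.ofReal (L0 a) := by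
      calc ∫⁻ x, ENNReal.ofReal (ev a x) ∂μ
          = ∫⁻ x, liminf (fun k => ENNReal.ofReal (ψ k x)) atTop ∂μ := by
            refine lintegral_congr fun x => ?_
            exact (((ENNReal.continuous_ofReal.tendsto _).comp (hlim x)).liminf_eq).symm
        _ ≤ liminf (fun k => ∫⁻ x, ENNReal.ofReal (ψ k x) ∂μ) atTop :=
            lintegral_liminf_le (fun k => (ENNReal.continuous_ofReal.comp (ψ k).continuous).measurable)
        _ ≤ ENNReal.ofReal (L0 a) := by
            refine liminf_le_of_le (by isBoundedDefault) fun b hb => ?_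
            obtain ⟨k, hk⟩ := hb.exists
            refine hk.trans ?_
            rw [← ofReal_integral_eq_lintegral_ofReal (hψint k) (Eventually.of_forall (hψ0 k))]
            exact ENNReal.ofReal_le_ofReal (hup k)
    have hI : Integrable (ev a) μ := by
      refine ⟨hmeas, ?_⟩
      rw [hasFiniteIntegral_iff_ofReal (Eventually.of_forall ha)]
      exact hfin.trans_lt ENNReal.ofReal_lt_top
    refine ⟨hI, ?_⟩
    have ht1 : Tendsto (fun k => ∫ x, ψ k x ∂μ) atTop (𝓝 (∫ x, ev a x ∂μ)) :=
      tendsto_integral_of_dominated_convergence (ev a) (fun k => (hψint k).aestronglyMeasurable) hI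
        (fun k => Eventually.of_forall fun x => by
          rw [Real.norm_of_nonneg (hψ0 k x)]
          exact hψ1 k x) (Eventually.of_forall hlim)
    have ht2 : Tendsto (fun k => ∫ x, ψ k x ∂μ) atTop (𝓝 (L0 a)) := by
      refine tendsto_of_tendsto_of_tendsto_of_le_of_le'
        (g := fun k : ℕ => L0 a - L0 (a * θ) / k) (h := fun _ => L0 a) ?_ tendsto_const_nhds ?_
        (Eventually.of_forall hup)
      · have := (tendsto_const_div_atTop_nhds_zero_nat (L0 (a * θ))).const_sub (L0 a)
        simpa using this
      · filter_upwards [eventually_gt_atTop 0] with k hk using hlow k hk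
    exact tendsto_nhds_unique ht2 ht1
  refine ⟨μ, fun a => ?_⟩
  have hsq : ∀ b : A, ∀ x, 0 ≤ ev (b ^ 2) x := fun b x => by
    rw [map_pow, Pi.pow_apply]
    positivity
  obtain ⟨i1, e1⟩ := main ((a + 1) ^ 2) (hsq _)
  obtain ⟨i2, e2⟩ := main ((a - 1) ^ 2) (hsq _)
  have ea : a = (1 / 4 : ℝ) • ((a + 1) ^ 2 - (a - 1) ^ 2) := by
    have h1 : (a + 1) ^ 2 - (a - 1) ^ 2 = algebraMap ℝ A 4 * a := by
      rw [map_ofNat]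
      ring
    rw [h1, Algebra.smul_def, ← mul_assoc, ← map_mul]
    norm_num
  have ef : ev a = fun x => (1 / 4 : ℝ) * (ev ((a + 1) ^ 2) x - ev ((a - 1) ^ 2) x) := by
    conv_lhs => rw [ea]
    rw [map_smul, map_sub]
    rfl
  constructor
  · rw [ef]
    exact (i1.sub i2).const_mul _
  · conv_lhs => rw [ea]
    rw [map_smul, map_sub, e1, e2, ef, integral_const_mul, integral_sub i1 i2, smul_eq_mul]

end Haviland

end Part9

set_option linter.unusedSectionVars false
open MeasureTheory Topology Filter

section Final
variable {d : ℕ} (𝔻 : Submonoid (MvPolynomial (Fin d) ℝ))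

theorem evalLoc_algebraMap (t : Fin d → ℝ) (ht : ∀ q ∈ 𝔻, MvPolynomial.eval t q ≠ 0)
    (p : MvPolynomial (Fin d) ℝ) :
    evalLoc 𝔻 t ht (algebraMap _ _ p) = MvPolynomial.eval t p := by
  simp [evalLoc, IsLocalization.lift_eq]

theorem evalLoc_mk (t : Fin d → ℝ) (ht : ∀ q ∈ 𝔻, MvPolynomial.eval t q ≠ 0)
    (p : MvPolynomial (Fin d) ℝ) (q : 𝔻) :
    evalLoc 𝔻 t ht (Localization.mk p q) =
      MvPolynomial.eval t p / MvPolynomial.eval t (q : MvPolynomial (Fin d) ℝ) := by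
  rw [eq_div_iff (ht q q.2), ← evalLoc_algebraMap 𝔻 t ht, ← evalLoc_algebraMap 𝔻 t ht, ← map_mul]
  congr 1
  rw [Localization.mk_eq_mk', IsLocalization.mk'_spec]

/-- Evaluation as an algebra homomorphism. -/
noncomputable def evalLocA (t : Fin d → ℝ) (ht : ∀ q ∈ 𝔻, MvPolynomial.eval t q ≠ 0) :
    Localization 𝔻 →ₐ[ℝ] ℝ :=
  { evalLoc 𝔻 t ht with
    commutes' := by
      intro r
      have h1 : algebraMap ℝ (Localization 𝔻) r =
          algebraMap (MvPolynomial (Fin d) ℝ) (Localization 𝔻) (MvPolynomial.C r) := by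
        rw [IsScalarTower.algebraMap_apply ℝ (MvPolynomial (Fin d) ℝ) (Localization 𝔻)]
        rfl
      have h2 := evalLoc_algebraMap 𝔻 t ht (MvPolynomial.C r)
      rw [← h1, MvPolynomial.eval_C] at h2
      exact h2 }

theorem evalLocA_apply (t : Fin d → ℝ) (ht : ∀ q ∈ 𝔻, MvPolynomial.eval t q ≠ 0)
    (a : Localization 𝔻) : evalLocA 𝔻 t ht a = evalLoc 𝔻 t ht a := rfl

theorem char_eq (χ : Localization 𝔻 →ₐ[ℝ] ℝ) :
    ∃ t : Fin d → ℝ, ∃ ht : ∀ q ∈ 𝔻, MvPolynomial.eval t q ≠ 0, ∀ a, χ a = evalLoc 𝔻 t ht a := by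
  set t : Fin d → ℝ := fun i => χ (algebraMap (MvPolynomial (Fin d) ℝ) _ (MvPolynomial.X i)) with htd
  have h1 : ∀ p, χ (algebraMap (MvPolynomial (Fin d) ℝ) _ p) = MvPolynomial.eval t p := by
    intro p
    have h2 : (χ.comp (IsScalarTower.toAlgHom ℝ (MvPolynomial (Fin d) ℝ) (Localization 𝔻))) =
        MvPolynomial.aeval t := by
      ext i
      simp [htd]
    have h3 := DFunLike.congr_fun h2 p
    rw [MvPolynomial.aeval_eq_eval] at h3
    exact h3
  have ht : ∀ q ∈ 𝔻, MvPolynomial.eval t q ≠ 0 := by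
    intro q hq
    rw [← h1]
    exact ((IsLocalization.map_units (Localization 𝔻) (⟨q, hq⟩ : 𝔻)).map χ).ne_zero
  refine ⟨t, ht, fun a => ?_⟩
  obtain ⟨p, q, rfl⟩ : ∃ p q, a = Localization.mk p q := by
    induction a using Localization.ind with
    | H y => exact ⟨y.1, y.2, rfl⟩
  rw [evalLoc_mk, eq_div_iff (ht q q.2), ← h1, ← h1, ← map_mul]
  congr 1
  rw [Localization.mk_eq_mk', IsLocalization.mk'_spec]

/-- The open set where all denominators are nonzero. -/
abbrev RegSet := {t : Fin d → ℝ // ∀ q ∈ 𝔻, MvPolynomial.eval t q ≠ 0}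

theorem exists_prod (hfg : 𝔻.FG) : ∃ g ∈ 𝔻, ∀ t : Fin d → ℝ, MvPolynomial.eval t g ≠ 0 →
    ∀ q ∈ 𝔻, MvPolynomial.eval t q ≠ 0 := by
  obtain ⟨F, hF⟩ := hfg
  refine ⟨∏ x ∈ F, x, Submonoid.prod_mem _ fun x hx => hF ▸ Submonoid.subset_closure hx, ?_⟩
  intro t ht q hq
  rw [map_prod, Finset.prod_ne_zero_iff] at ht
  rw [← hF] at hq
  induction hq using Submonoid.closure_induction with
  | mem x hx => exact ht x hx
  | one => simp
  | mul x y _ _ hx hy => rw [map_mul]; exact mul_ne_zero hx hy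

theorem regSet_open (hfg : 𝔻.FG) :
    IsOpen {t : Fin d → ℝ | ∀ q ∈ 𝔻, MvPolynomial.eval t q ≠ 0} := by
  obtain ⟨g, hg, h⟩ := exists_prod 𝔻 hfg
  have : {t : Fin d → ℝ | ∀ q ∈ 𝔻, MvPolynomial.eval t q ≠ 0} =
      {t | MvPolynomial.eval t g ≠ 0} := by
    ext t
    exact ⟨fun ht => ht g hg, fun ht => h t ht⟩
  rw [this]
  exact isOpen_ne_fun (MvPolynomial.continuous_eval g) continuous_const

/-- Evaluation on the regular set. -/
noncomputable def evReg : Localization 𝔻 →ₐ[ℝ] (RegSet 𝔻 → ℝ) :=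
  AlgHom.pi fun t => evalLocA 𝔻 t.1 t.2

theorem evReg_apply (a : Localization 𝔻) (t : RegSet 𝔻) : evReg 𝔻 a t = evalLoc 𝔻 t.1 t.2 a := rfl

theorem evReg_mk (p : MvPolynomial (Fin d) ℝ) (q : 𝔻) (t : RegSet 𝔻) :
    evReg 𝔻 (Localization.mk p q) t =
      MvPolynomial.eval t.1 p / MvPolynomial.eval t.1 (q : MvPolynomial (Fin d) ℝ) :=
  evalLoc_mk 𝔻 t.1 t.2 p q

theorem evReg_cont (a : Localization 𝔻) : Continuous (evReg 𝔻 a) := by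
  induction a using Localization.ind with
  | H y =>
    have h1 : evReg 𝔻 (Localization.mk y.1 y.2) = fun t : RegSet 𝔻 =>
        MvPolynomial.eval t.1 y.1 / MvPolynomial.eval t.1 (y.2 : MvPolynomial (Fin d) ℝ) := by
      funext t
      exact evReg_mk 𝔻 y.1 y.2 t
    rw [h1]
    exact Continuous.div ((MvPolynomial.continuous_eval _).comp continuous_subtype_val)
      ((MvPolynomial.continuous_eval _).comp continuous_subtype_val) (fun t => t.2 _ y.2.2)

theorem exists_theta (hfg : 𝔻.FG) : ∃ θ : Localization 𝔻, (∀ x, 0 ≤ evReg 𝔻 θ x) ∧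
    ∀ r : ℝ, IsCompact {x | evReg 𝔻 θ x ≤ r} := by
  obtain ⟨g, hg, h⟩ := exists_prod 𝔻 hfg
  set θ : Localization 𝔻 := algebraMap (MvPolynomial (Fin d) ℝ) (Localization 𝔻) (∑ i : Fin d, (MvPolynomial.X i) ^ 2) +
    (Localization.mk 1 ⟨g, hg⟩) ^ 2 with hθ
  have hval : ∀ x : RegSet 𝔻, evReg 𝔻 θ x =
      ∑ i, (x.1 i) ^ 2 + (1 / MvPolynomial.eval x.1 g) ^ 2 := by
    intro x
    rw [hθ, map_add, map_pow, Pi.add_apply, Pi.pow_apply, evReg_mk, evReg_apply, evalLoc_algebraMap]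
    simp
  refine ⟨θ, fun x => ?_, fun r => ?_⟩
  · rw [hval]
    positivity
  rw [Subtype.isCompact_iff]
  have himg : (Subtype.val '' {x : RegSet 𝔻 | evReg 𝔻 θ x ≤ r}) =
      {t : Fin d → ℝ | (∑ i, (t i) ^ 2) * (MvPolynomial.eval t g) ^ 2 + 1 ≤
        r * (MvPolynomial.eval t g) ^ 2} := by
    ext t
    constructor
    · rintro ⟨x, hx, rfl⟩
      have hx' : evReg 𝔻 θ x ≤ r := hx
      rw [hval] at hx'
      have hgx := x.2 g hg
      have h2 : 0 < (MvPolynomial.eval x.1 g) ^ 2 := by positivity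
      have h3 := mul_le_mul_of_nonneg_right hx' h2.le
      have h4 : (1 / MvPolynomial.eval x.1 g) ^ 2 * (MvPolynomial.eval x.1 g) ^ 2 = 1 := by
        field_simp
      rw [add_mul, h4] at h3
      exact h3
    · intro ht
      have ht' : (∑ i, (t i) ^ 2) * (MvPolynomial.eval t g) ^ 2 + 1 ≤
        r * (MvPolynomial.eval t g) ^ 2 := ht
      have hgt : MvPolynomial.eval t g ≠ 0 := by
        intro h0
        rw [h0] at ht'
        norm_num at ht'
      have h2 : 0 < (MvPolynomial.eval t g) ^ 2 := by positivity
      refine ⟨⟨t, h t hgt⟩, ?_, rfl⟩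
      change evReg 𝔻 θ _ ≤ r
      rw [hval]
      have h4 : (1 / MvPolynomial.eval t g) ^ 2 * (MvPolynomial.eval t g) ^ 2 = 1 := by
        field_simp
      refine le_of_mul_le_mul_right ?_ h2
      rw [add_mul]
      change (∑ i, (t i) ^ 2) * (MvPolynomial.eval t g) ^ 2 +
        (1 / MvPolynomial.eval t g) ^ 2 * (MvPolynomial.eval t g) ^ 2 ≤ _
      rw [h4]
      exact ht'
  rw [himg]
  refine Metric.isCompact_of_isClosed_isBounded ?_ ?_
  · have hc := MvPolynomial.continuous_eval g
    exact isClosed_le (by fun_prop) (by fun_prop)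
  · refine (Metric.isBounded_closedBall (x := (0 : Fin d → ℝ)) (r := |r| + 1)).subset ?_
    intro t ht
    have ht' : (∑ i, (t i) ^ 2) * (MvPolynomial.eval t g) ^ 2 + 1 ≤
        r * (MvPolynomial.eval t g) ^ 2 := ht
    have h5 : ∑ i, (t i) ^ 2 ≤ r := by
      by_contra hcon
      push Not at hcon
      nlinarith [sq_nonneg (MvPolynomial.eval t g)]
    rw [mem_closedBall_zero_iff, pi_norm_le_iff_of_nonneg (by positivity)]
    intro i
    have h6 : (t i) ^ 2 ≤ r :=
      (Finset.single_le_sum (f := fun i => (t i) ^ 2) (fun i _ => sq_nonneg _)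
        (Finset.mem_univ i)).trans h5
    rw [Real.norm_eq_abs]
    have h7 : (0 : ℝ) ≤ |r| + 1 := by positivity
    refine abs_le_of_sq_le_sq ?_ h7
    nlinarith [le_abs_self r, abs_nonneg r]

end Final

theorem rational_moment_problem_fg {d : ℕ}
    (𝔻 : Submonoid (MvPolynomial (Fin d) ℝ)) (h𝔻0 : (0 : MvPolynomial (Fin d) ℝ) ∉ 𝔻)
    (h𝔻fg : 𝔻.FG) {k m : ℕ} (f : Fin k → MvPolynomial (Fin d) ℝ)
    (h : Fin m → Localization 𝔻)
    (hbd : ∃ C : ℝ, ∀ t : Fin d → ℝ, ∀ ht : ∀ q ∈ 𝔻, MvPolynomial.eval t q ≠ 0,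
      (∀ i : Fin k, 0 ≤ MvPolynomial.eval t (f i)) →
      ∀ j : Fin m, |evalLoc 𝔻 t ht (h j)| ≤ C)
    (hfib : ∀ lam : Fin m → ℝ,
      (∃ t : Fin d → ℝ, ∃ ht : ∀ q ∈ 𝔻, MvPolynomial.eval t q ≠ 0,
        (∀ i : Fin k, 0 ≤ MvPolynomial.eval t (f i)) ∧
        ∀ j : Fin m, evalLoc 𝔻 t ht (h j) = lam j) →
      ∃ (ℰ : Submonoid (Polynomial ℝ)), (0 : Polynomial ℝ) ∉ ℰ ∧ ℰ.FG ∧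
        ∃ (Cb : FinCommAlg)
          (ρ : TensorProduct ℝ (Localization ℰ) Cb.carrier →ₐ[ℝ]
            (Localization 𝔻 ⧸ Ideal.span (Set.range fun j : Fin m =>
              h j - algebraMap ℝ (Localization 𝔻) (lam j)))),
          Function.Surjective ρ)
    (L : Localization 𝔻 →ₗ[ℝ] ℝ)
    (hL : ∀ a : Localization 𝔻,
      IsInPreordering
        (Set.range fun i : Fin k =>
          algebraMap (MvPolynomial (Fin d) ℝ) (Localization 𝔻) (f i)) a → 0 ≤ L a) :
    ∃ μ : MeasureTheory.Measure (Fin d → ℝ),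
      (∀ q ∈ 𝔻, μ {x : Fin d → ℝ | MvPolynomial.eval x q = 0} = 0) ∧
      ∀ (p : MvPolynomial (Fin d) ℝ) (q : MvPolynomial (Fin d) ℝ) (hq : q ∈ 𝔻),
        MeasureTheory.Integrable
          (fun x : Fin d → ℝ => MvPolynomial.eval x p / MvPolynomial.eval x q) μ ∧
        L (Localization.mk p ⟨q, hq⟩) =
          ∫ x : Fin d → ℝ, MvPolynomial.eval x p / MvPolynomial.eval x q ∂μ := by
  haveI hft : Algebra.FiniteType (MvPolynomial (Fin d) ℝ) (Localization 𝔻) := by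
    haveI : Monoid.FG 𝔻 := (Monoid.fg_iff_submonoid_fg 𝔻).2 h𝔻fg
    exact IsLocalization.finiteType_of_monoid_fg 𝔻 _
  haveI hft2 : Algebra.FiniteType ℝ (Localization 𝔻) :=
    Algebra.FiniteType.trans (S := MvPolynomial (Fin d) ℝ) inferInstance hft
  have hS : ∀ (t : Fin d → ℝ) (ht : ∀ q ∈ 𝔻, MvPolynomial.eval t q ≠ 0)
      (χ : Localization 𝔻 →ₐ[ℝ] ℝ), (∀ a, χ a = evalLoc 𝔻 t ht a) →
      (∀ s ∈ Set.range fun i : Fin k =>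
          algebraMap (MvPolynomial (Fin d) ℝ) (Localization 𝔻) (f i), 0 ≤ χ s) →
      ∀ i, 0 ≤ MvPolynomial.eval t (f i) := by
    intro t ht χ hχ h1 i
    have := h1 _ ⟨i, rfl⟩
    rwa [hχ, evalLoc_algebraMap] at this
  have hpos : ∀ a : Localization 𝔻, (∀ x, 0 ≤ evReg 𝔻 a x) → 0 ≤ L a := by
    intro p hp
    refine nonneg_of_chars _ (Set.finite_range _) h ?_ ?_ p ?_ L hL
    · obtain ⟨C, hC⟩ := hbd
      refine ⟨C, fun χ hχ j => ?_⟩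
      obtain ⟨t, ht, e⟩ := char_eq 𝔻 χ
      rw [e]
      exact hC t ht (hS t ht χ e hχ) j
    · rintro lam ⟨χ, hχ, hlam⟩
      obtain ⟨t, ht, e⟩ := char_eq 𝔻 χ
      exact hfib lam ⟨t, ht, hS t ht χ e hχ, fun j => by rw [← e, hlam]⟩
    · intro χ
      obtain ⟨t, ht, e⟩ := char_eq 𝔻 χ
      rw [e]
      exact hp ⟨t, ht⟩
  have hopen := regSet_open 𝔻 h𝔻fg
  haveI : LocallyCompactSpace (RegSet 𝔻) := hopen.locallyCompactSpace
  obtain ⟨θ, hθ0, hθ⟩ := exists_theta 𝔻 h𝔻fg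
  obtain ⟨μ, hμ⟩ := haviland (evReg 𝔻) (evReg_cont 𝔻) L hpos θ hθ0 hθ
  have hemb : MeasurableEmbedding (Subtype.val : RegSet 𝔻 → (Fin d → ℝ)) :=
    MeasurableEmbedding.subtype_coe hopen.measurableSet
  refine ⟨μ.map Subtype.val, fun q hq => ?_, fun p q hq => ?_⟩
  · rw [hemb.map_apply]
    have : (Subtype.val : RegSet 𝔻 → (Fin d → ℝ)) ⁻¹'
        {x : Fin d → ℝ | MvPolynomial.eval x q = 0} = ∅ := by
      ext x
      simp only [Set.mem_preimage, Set.mem_empty_iff_false, iff_false]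
      exact x.2 q hq
    rw [this, measure_empty]
  · obtain ⟨h1, h2⟩ := hμ (Localization.mk p ⟨q, hq⟩)
    have h3 : evReg 𝔻 (Localization.mk p ⟨q, hq⟩) =
        (fun x : Fin d → ℝ => MvPolynomial.eval x p / MvPolynomial.eval x q) ∘ Subtype.val := by
      funext t
      exact evReg_mk 𝔻 p ⟨q, hq⟩ t
    rw [hemb.integrable_map_iff, hemb.integral_map, h2, h3]
    exact ⟨h3 ▸ h1, rfl⟩
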